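/- arXiv:1009.3421 — 3 statements merged into one kernel-verified Lean document; each statement's English description precedes it below -/
import Mathlib

section
/- Poincaré inequality for the Gaussian measure: for every smooth compactly supported function f on ℝⁿ, Var_γ(f) := ∫ f² dγ − (∫ f dγ)² ≤ ∫ |∇f|² dγ. -/
open MeasureTheory Real

noncomputable def gaussian (n : ℕ) : Measure (EuclideanSpace ℝ (Fin n)) :=
  (volume : Measure (EuclideanSpace ℝ (Fin n))).withDensity
    (fun x => ENNReal.ofReal ((2 * Real.pi) ^ (-(n : ℝ) / 2) * Real.exp (-‖x‖ ^ 2 / 2)))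

noncomputable def OU (n : ℕ) (t : ℝ) (f : EuclideanSpace ℝ (Fin n) → ℝ)
    (x : EuclideanSpace ℝ (Fin n)) : ℝ :=
  ∫ y, f (Real.exp (-t) • x + Real.sqrt (1 - Real.exp (-2 * t)) • y) ∂(gaussian n)

open ProbabilityTheory
open scoped RealInnerProductSpace

noncomputable def gaussianDensity (n : ℕ) (x : EuclideanSpace ℝ (Fin n)) : ℝ :=
  (2 * Real.pi) ^ (-(n : ℝ) / 2) * Real.exp (-‖x‖ ^ 2 / 2)

lemma gaussianDensity_nonneg (n : ℕ) (x : EuclideanSpace ℝ (Fin n)) :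
    0 ≤ gaussianDensity n x := by
  unfold gaussianDensity; positivity

lemma measurable_gaussianDensity (n : ℕ) :
    Measurable fun x => ENNReal.ofReal (gaussianDensity n x) := by
  unfold gaussianDensity; fun_prop

lemma integral_gaussian_eq {F : Type*} [NormedAddCommGroup F] [NormedSpace ℝ F] (n : ℕ)
    (g : EuclideanSpace ℝ (Fin n) → F) :
    ∫ x, g x ∂(gaussian n) = ∫ x, gaussianDensity n x • g x := by
  change ∫ x, g x ∂(volume.withDensity fun x => ENNReal.ofReal (gaussianDensity n x)) = _
  rw [integral_withDensity_eq_integral_toReal_smul (measurable_gaussianDensity n) (by simp)]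
  simp_rw [ENNReal.toReal_ofReal (gaussianDensity_nonneg n _)]

lemma integrable_gaussian_iff (n : ℕ) (g : EuclideanSpace ℝ (Fin n) → ℝ) :
    Integrable g (gaussian n) ↔ Integrable fun x => g x * gaussianDensity n x := by
  change Integrable g (volume.withDensity fun x => ENNReal.ofReal (gaussianDensity n x)) ↔ _
  rw [integrable_withDensity_iff (measurable_gaussianDensity n) (by simp)]
  simp_rw [ENNReal.toReal_ofReal (gaussianDensity_nonneg n _)]

lemma integrable_gaussianDensity (n : ℕ) : Integrable (gaussianDensity n) := by
  have h := (GaussianFourier.integrable_cexp_neg_mul_sq_norm_add (V := EuclideanSpace ℝ (Fin n))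
    (b := 1 / 2) (by norm_num) 0 0).norm.const_mul ((2 * Real.pi) ^ (-(n : ℝ) / 2))
  refine h.congr (.of_forall fun x => ?_)
  simp only [gaussianDensity, Complex.norm_exp]
  congr 2
  norm_cast
  simp
  norm_cast
  ring

instance isFiniteMeasure_gaussian (n : ℕ) : IsFiniteMeasure (gaussian n) :=
  isFiniteMeasure_withDensity_ofReal (integrable_gaussianDensity n).hasFiniteIntegral

lemma gaussian_eq_stdGaussian (n : ℕ) : gaussian n = stdGaussian (EuclideanSpace ℝ (Fin n)) := by
  refine Measure.ext_of_charFun (funext fun t => ?_)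
  have h := GaussianFourier.integral_cexp_neg_mul_sq_norm_add (V := EuclideanSpace ℝ (Fin n))
    (b := 1 / 2) (by norm_num) Complex.I t
  have hpi : (2 * Real.pi) ^ (-(n : ℝ) / 2) * (2 * Real.pi) ^ ((n : ℝ) / 2) = 1 := by
    rw [← Real.rpow_add (by positivity)]
    simp [neg_div]
  have hpi' : ((Real.pi : ℂ) / (1 / 2)) ^ ((n : ℂ) / 2)
      = (((2 * Real.pi) ^ ((n : ℝ) / 2) : ℝ) : ℂ) := by
    rw [Complex.ofReal_cpow (by positivity)]
    push_cast
    congr 1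
    ring
  rw [finrank_euclideanSpace_fin, hpi'] at h
  rw [charFun_stdGaussian, charFun_apply, integral_gaussian_eq]
  calc ∫ x, gaussianDensity n x • Complex.exp (⟪x, t⟫ * Complex.I)
      = ∫ x : EuclideanSpace ℝ (Fin n), (((2 * Real.pi) ^ (-(n : ℝ) / 2) : ℝ) : ℂ)
          * Complex.exp (-(1 / 2) * ‖x‖ ^ 2 + Complex.I * ⟪t, x⟫) := by
        refine integral_congr_ae (.of_forall fun x => ?_)
        simp only [gaussianDensity, Complex.real_smul, Complex.ofReal_mul, Complex.ofReal_exp,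
          mul_assoc, Complex.exp_add, real_inner_comm x t]
        congr 3
        · push_cast; ring
        · ring
    _ = _ := by
        rw [integral_const_mul, h, ← mul_assoc, ← Complex.ofReal_mul, hpi]
        simp
        ring_nf

instance isGaussian_gaussian (n : ℕ) : IsGaussian (gaussian n) := by
  rw [gaussian_eq_stdGaussian]; infer_instance

lemma map_rotation_gaussian (n : ℕ) (θ : ℝ) :
    ((gaussian n).prod (gaussian n)).map (ContinuousLinearMap.rotation θ)
      = (gaussian n).prod (gaussian n) :=
  IsGaussian.map_rotation_eq_self (by simp [gaussian_eq_stdGaussian]) θ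

lemma hasFDerivAt_gaussianDensity (n : ℕ) (x : EuclideanSpace ℝ (Fin n)) :
    HasFDerivAt (gaussianDensity n) (-gaussianDensity n x • innerSL ℝ x) x := by
  have h := ((((hasStrictFDerivAt_norm_sq x).hasFDerivAt).const_mul (-1 / 2 : ℝ)).exp).const_mul
    ((2 * Real.pi) ^ (-(n : ℝ) / 2))
  refine (h.congr_fderiv ?_).congr_of_eventuallyEq (.of_forall fun y => ?_)
  · ext v
    simp [gaussianDensity]
    ring_nf
  · simp only [gaussianDensity]
    congr 2
    ring

/-- Gaussian integration by parts in the direction `v`. -/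
lemma integral_mul_inner_gaussian {n : ℕ} {h : EuclideanSpace ℝ (Fin n) → ℝ}
    (hh : ContDiff ℝ 1 h) {C : ℝ} (hC : ∀ y, ‖h y‖ ≤ C) {D : ℝ} (hD : ∀ y, ‖fderiv ℝ h y‖ ≤ D)
    (v : EuclideanSpace ℝ (Fin n)) :
    ∫ y, h y * ⟪v, y⟫ ∂(gaussian n) = ∫ y, fderiv ℝ h y v ∂(gaussian n) := by
  have hfd (y) : fderiv ℝ (gaussianDensity n) y v = -(⟪v, y⟫ * gaussianDensity n y) := by
    rw [(hasFDerivAt_gaussianDensity n y).fderiv]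
    simp [real_inner_comm, mul_comm]
  have h1 : Integrable (fun y => fderiv ℝ h y v) (gaussian n) := by
    refine .of_bound (C := D * ‖v‖) ?_ (.of_forall fun y => ?_)
    · exact ((hh.continuous_fderiv one_ne_zero).clm_apply continuous_const).aestronglyMeasurable
    · exact (fderiv ℝ h y).le_of_opNorm_le (hD y) v
  have h2 : Integrable (fun y => h y * ⟪v, y⟫) (gaussian n) := by
    refine Integrable.bdd_mul (c := C) ?_ hh.continuous.aestronglyMeasurable (.of_forall hC)
    exact (innerSL ℝ v).integrable_comp IsGaussian.integrable_id
  have h3 : Integrable h (gaussian n) :=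
    .of_bound hh.continuous.aestronglyMeasurable C (.of_forall hC)
  have key := integral_mul_fderiv_eq_neg_fderiv_mul_of_integrable (𝕜 := ℝ) (μ := volume)
    (f := h) (g := gaussianDensity n) (v := v)
    ((integrable_gaussian_iff n _).1 h1)
    (((integrable_gaussian_iff n _).1 h2).neg.congr
      (.of_forall fun y => by simp [hfd, mul_assoc]))
    ((integrable_gaussian_iff n _).1 h3)
    (fun x _ => hh.differentiable one_ne_zero x)
    (fun x _ => (hasFDerivAt_gaussianDensity n x).differentiableAt)
  simp_rw [hfd, mul_neg, integral_neg, neg_inj] at key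
  simp_rw [integral_gaussian_eq, smul_eq_mul]
  calc _ = ∫ y, h y * (⟪v, y⟫ * gaussianDensity n y) := by congr! 2; ring
    _ = _ := by rw [key]; congr! 2; ring

lemma integral_comp_rotation_gaussian {n : ℕ} (θ : ℝ)
    {G : EuclideanSpace ℝ (Fin n) × EuclideanSpace ℝ (Fin n) → ℝ} (hG : Continuous G) :
    ∫ p, G (ContinuousLinearMap.rotation θ p) ∂((gaussian n).prod (gaussian n))
      = ∫ p, G p ∂((gaussian n).prod (gaussian n)) := by
  conv_rhs => rw [← map_rotation_gaussian n θ]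
  exact (integral_map (ContinuousLinearMap.rotation θ).continuous.aemeasurable
    hG.aestronglyMeasurable).symm

lemma integral_comp_cos_sub_sin_gaussian {n : ℕ} (θ : ℝ)
    {g : EuclideanSpace ℝ (Fin n) → ℝ} (hg : Continuous g) :
    ∫ p, g (Real.cos θ • p.1 - Real.sin θ • p.2) ∂((gaussian n).prod (gaussian n))
      = ∫ x, g x ∂(gaussian n) := by
  have h := integral_comp_rotation_gaussian (n := n) (-θ) (G := fun p => g p.1) (by fun_prop)
  simp only [ContinuousLinearMap.rotation_apply, Real.cos_neg, Real.sin_neg, neg_smul,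
    ← sub_eq_add_neg] at h
  rw [h, integral_fun_fst]
  simp

section Interpolation

variable {n : ℕ} {f : EuclideanSpace ℝ (Fin n) → ℝ} {C D : ℝ}

lemma continuous_fderiv_interpolation (hf : ContDiff ℝ 1 f) :
    Continuous fun q : ℝ × EuclideanSpace ℝ (Fin n) × EuclideanSpace ℝ (Fin n) =>
      f q.2.1 * fderiv ℝ f (Real.cos q.1 • q.2.1 + Real.sin q.1 • q.2.2)
        (-Real.sin q.1 • q.2.1 + Real.cos q.1 • q.2.2) := by
  have hc := hf.continuous
  have hd := hf.continuous_fderiv one_ne_zero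
  refine (hc.comp (by fun_prop)).mul ((hd.comp ?_).clm_apply ?_) <;> fun_prop

lemma continuous_gradient (hf : ContDiff ℝ 1 f) : Continuous (gradient f) :=
  (InnerProductSpace.toDual ℝ (EuclideanSpace ℝ (Fin n))).symm.continuous.comp
    (hf.continuous_fderiv one_ne_zero)

lemma integrable_fderiv_gradient (hf : ContDiff ℝ 1 f) (hD : ∀ y, ‖fderiv ℝ f y‖ ≤ D) (θ : ℝ) :
    Integrable (fun p => fderiv ℝ f (Real.cos θ • p.1 - Real.sin θ • p.2) (gradient f p.1))
      ((gaussian n).prod (gaussian n)) := by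
  refine .of_bound (C := D * D) ?_ (.of_forall fun p => ?_)
  · exact (((hf.continuous_fderiv one_ne_zero).comp (by fun_prop)).clm_apply
      ((continuous_gradient hf).comp continuous_fst)).aestronglyMeasurable
  · refine (fderiv ℝ f _).le_of_opNorm_le_of_le (hD _) ?_
    simpa [gradient] using hD p.1

/-- Rotating the pair of independent Gaussians and integrating by parts turns the derivative of
`θ ↦ 𝔼[f(X) f(cos θ X + sin θ Y)]` into a correlation of gradients. -/
lemma integral_mul_fderiv_rotation_gaussian (hf : ContDiff ℝ 1 f) (hC : ∀ y, ‖f y‖ ≤ C)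
    (hD : ∀ y, ‖fderiv ℝ f y‖ ≤ D) (θ : ℝ) :
    ∫ p, f p.1 * fderiv ℝ f (Real.cos θ • p.1 + Real.sin θ • p.2)
        (-Real.sin θ • p.1 + Real.cos θ • p.2) ∂((gaussian n).prod (gaussian n))
      = -Real.sin θ * ∫ p, fderiv ℝ f (Real.cos θ • p.1 - Real.sin θ • p.2) (gradient f p.1)
          ∂((gaussian n).prod (gaussian n)) := by
  have hc := hf.continuous
  have hd := hf.continuous_fderiv one_ne_zero
  have hC0 : 0 ≤ C := (norm_nonneg _).trans (hC 0)
  let G : EuclideanSpace ℝ (Fin n) × EuclideanSpace ℝ (Fin n) → ℝ := fun p =>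
    f (Real.cos θ • p.1 - Real.sin θ • p.2) * fderiv ℝ f p.1 p.2
  have hG : Continuous G :=
    (hc.comp (by fun_prop)).mul ((hd.comp continuous_fst).clm_apply continuous_snd)
  have hGi : Integrable G ((gaussian n).prod (gaussian n)) := by
    have h : Integrable (fun p => C * D * ‖p.2‖) ((gaussian n).prod (gaussian n)) :=
      ((IsGaussian.integrable_id (μ := gaussian n)).norm.comp_snd (gaussian n)).const_mul _
    refine h.mono' hG.aestronglyMeasurable (.of_forall fun p => ?_)
    rw [norm_mul, mul_assoc]
    exact mul_le_mul (hC _) ((fderiv ℝ f p.1).le_of_opNorm_le (hD _) _) (norm_nonneg _) hC0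
  have hrot (p : EuclideanSpace ℝ (Fin n) × EuclideanSpace ℝ (Fin n)) :
      f p.1 * fderiv ℝ f (Real.cos θ • p.1 + Real.sin θ • p.2)
        (-Real.sin θ • p.1 + Real.cos θ • p.2) = G (ContinuousLinearMap.rotation θ p) := by
    have h1 : Real.cos θ • (Real.cos θ • p.1 + Real.sin θ • p.2)
        - Real.sin θ • (-Real.sin θ • p.1 + Real.cos θ • p.2) = p.1 := by
      have : p.1 = (Real.cos θ ^ 2 + Real.sin θ ^ 2) • p.1 := by simp
      conv_rhs => rw [this]
      module
    simp only [G, ContinuousLinearMap.rotation_apply, h1]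
  simp_rw [hrot]
  rw [integral_comp_rotation_gaussian θ hG, integral_prod _ hGi, integral_prod _ (integrable_fderiv_gradient hf hD θ),
    ← integral_const_mul]
  refine integral_congr_ae (.of_forall fun u => ?_)
  have hfd (v) : HasFDerivAt (fun v => f (Real.cos θ • u - Real.sin θ • v))
      (-Real.sin θ • fderiv ℝ f (Real.cos θ • u - Real.sin θ • v)) v := by
    have h1 : HasFDerivAt (fun v => Real.cos θ • u - Real.sin θ • v)
        (-(Real.sin θ • ContinuousLinearMap.id ℝ (EuclideanSpace ℝ (Fin n)))) v :=
      ((hasFDerivAt_id v).const_smul (Real.sin θ)).const_sub (Real.cos θ • u)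
    refine ((hf.differentiable one_ne_zero _).hasFDerivAt.comp v h1).congr_fderiv ?_
    ext w
    simp
  have h := integral_mul_inner_gaussian (h := fun v => f (Real.cos θ • u - Real.sin θ • v))
    (hf.comp (by fun_prop)) (fun _ => hC _) (D := D) (fun v => ?_) (gradient f u)
  · simp only [G]
    rw [← integral_const_mul]
    simpa [(hfd _).fderiv, gradient] using h
  · rw [(hfd v).fderiv, norm_smul, norm_neg]
    exact (mul_le_of_le_one_left (norm_nonneg _) (Real.abs_sin_le_one θ)).trans (hD _)

lemma integral_fderiv_gradient_gaussian_le (hf : ContDiff ℝ 1 f)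
    (hD : ∀ y, ‖fderiv ℝ f y‖ ≤ D) (θ : ℝ) :
    ∫ p, fderiv ℝ f (Real.cos θ • p.1 - Real.sin θ • p.2) (gradient f p.1)
          ∂((gaussian n).prod (gaussian n))
      ≤ ∫ x, ‖gradient f x‖ ^ 2 ∂(gaussian n) := by
  have hgrad := continuous_gradient hf
  have hgn (x) : ‖gradient f x‖ = ‖fderiv ℝ f x‖ := by simp [gradient]
  have hb (x) : ‖‖gradient f x‖ ^ 2‖ ≤ D ^ 2 := by
    rw [hgn, norm_pow, norm_norm]
    exact pow_le_pow_left₀ (norm_nonneg _) (hD x) 2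
  have hcont : Continuous fun x => ‖gradient f x‖ ^ 2 := by fun_prop
  have h1 : Integrable (fun p => ‖gradient f (Real.cos θ • p.1 - Real.sin θ • p.2)‖ ^ 2)
      ((gaussian n).prod (gaussian n)) :=
    .of_bound (by fun_prop) (D ^ 2) (.of_forall fun p => hb _)
  have h2 : Integrable (fun p => ‖gradient f p.1‖ ^ 2) ((gaussian n).prod (gaussian n)) :=
    .of_bound (by fun_prop) (D ^ 2) (.of_forall fun p => hb _)
  calc _ ≤ ∫ p, 1 / 2 * (‖gradient f (Real.cos θ • p.1 - Real.sin θ • p.2)‖ ^ 2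
          + ‖gradient f p.1‖ ^ 2) ∂((gaussian n).prod (gaussian n)) := by
        refine integral_mono (integrable_fderiv_gradient hf hD θ) ((h1.add h2).const_mul _) fun p => ?_
        refine (le_abs_self _).trans (((fderiv ℝ f _).le_opNorm _).trans ?_)
        simp only [hgn]
        nlinarith [two_mul_le_add_sq ‖fderiv ℝ f (Real.cos θ • p.1 - Real.sin θ • p.2)‖
          ‖fderiv ℝ f p.1‖]
    _ = _ := by
        rw [integral_const_mul, integral_add h1 h2,
          integral_comp_cos_sub_sin_gaussian θ hcont,
          integral_fun_fst (fun x => ‖gradient f x‖ ^ 2)]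
        simp
        ring

lemma integrable_fderiv_interpolation (hf : ContDiff ℝ 1 f) (hC : ∀ y, ‖f y‖ ≤ C)
    (hD : ∀ y, ‖fderiv ℝ f y‖ ≤ D) (a b : ℝ) :
    Integrable (fun q : ℝ × EuclideanSpace ℝ (Fin n) × EuclideanSpace ℝ (Fin n) =>
      f q.2.1 * fderiv ℝ f (Real.cos q.1 • q.2.1 + Real.sin q.1 • q.2.2)
        (-Real.sin q.1 • q.2.1 + Real.cos q.1 • q.2.2))
      ((volume.restrict (Set.uIoc a b)).prod ((gaussian n).prod (gaussian n))) := by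
  have hC0 : 0 ≤ C := (norm_nonneg _).trans (hC 0)
  have : IsFiniteMeasure ((volume : Measure ℝ).restrict (Set.uIoc a b)) :=
    isFiniteMeasure_restrict.2 (by simp [Set.uIoc])
  have hid := (IsGaussian.integrable_id (μ := gaussian n)).norm
  have h : Integrable (fun p : EuclideanSpace ℝ (Fin n) × EuclideanSpace ℝ (Fin n) =>
      C * (D * (‖p.1‖ + ‖p.2‖))) ((gaussian n).prod (gaussian n)) :=
    (((hid.comp_fst (gaussian n)).add (hid.comp_snd (gaussian n))).const_mul D).const_mul C
  refine (h.comp_snd (volume.restrict (Set.uIoc a b))).mono'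
    (continuous_fderiv_interpolation hf).aestronglyMeasurable (.of_forall fun q => ?_)
  rw [norm_mul]
  refine mul_le_mul (hC _) ((fderiv ℝ f _).le_of_opNorm_le_of_le (hD _) ?_) (norm_nonneg _) hC0
  refine (norm_add_le _ _).trans (add_le_add ?_ ?_) <;> rw [norm_smul]
  · rw [norm_neg]
    exact mul_le_of_le_one_left (norm_nonneg _) (Real.abs_sin_le_one _)
  · exact mul_le_of_le_one_left (norm_nonneg _) (Real.abs_cos_le_one _)

lemma integral_fderiv_interpolation (hf : ContDiff ℝ 1 f) (x y : EuclideanSpace ℝ (Fin n)) :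
    ∫ θ in (0 : ℝ)..Real.pi / 2, f x * fderiv ℝ f (Real.cos θ • x + Real.sin θ • y)
      (-Real.sin θ • x + Real.cos θ • y) = f x * f y - f x ^ 2 := by
  have hderiv (θ : ℝ) : HasDerivAt (fun θ => f x * f (Real.cos θ • x + Real.sin θ • y))
      (f x * fderiv ℝ f (Real.cos θ • x + Real.sin θ • y)
        (-Real.sin θ • x + Real.cos θ • y)) θ :=
    ((hf.differentiable one_ne_zero _).hasFDerivAt.comp_hasDerivAt θ
      (((Real.hasDerivAt_cos θ).smul_const x).add
        ((Real.hasDerivAt_sin θ).smul_const y))).const_mul _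
  have hcont := (continuous_fderiv_interpolation hf).comp
    (continuous_id.prodMk (continuous_const (y := (x, y))))
  rw [intervalIntegral.integral_eq_sub_of_hasDerivAt (fun θ _ => hderiv θ)
    (hcont.intervalIntegrable _ _)]
  simp [sq]

end Interpolation

theorem gaussian_poincare (n : ℕ) (f : EuclideanSpace ℝ (Fin n) → ℝ)
    (hf : ContDiff ℝ (⊤ : ℕ∞) f) (hfs : HasCompactSupport f) :
    (∫ x, f x ^ 2 ∂(gaussian n)) - (∫ x, f x ∂(gaussian n)) ^ 2
      ≤ ∫ x, ‖gradient f x‖ ^ 2 ∂(gaussian n) := by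
  have hf1 : ContDiff ℝ 1 f := hf.of_le (by exact_mod_cast le_top)
  obtain ⟨C, hC⟩ := hf1.continuous.bounded_above_of_compact_support hfs
  obtain ⟨D, hD⟩ := (hf1.continuous_fderiv one_ne_zero).bounded_above_of_compact_support
    (hfs.fderiv ℝ)
  have hC0 : 0 ≤ C := (norm_nonneg _).trans (hC 0)
  have hcont := hf1.continuous
  set μ := (gaussian n).prod (gaussian n)
  set A := ∫ x, ‖gradient f x‖ ^ 2 ∂(gaussian n)
  have hvar : ∫ p, f p.1 * f p.2 - f p.1 ^ 2 ∂μ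
      = (∫ x, f x ∂(gaussian n)) ^ 2 - ∫ x, f x ^ 2 ∂(gaussian n) := by
    have h1 : Integrable (fun p : EuclideanSpace ℝ (Fin n) × EuclideanSpace ℝ (Fin n) =>
        f p.1 * f p.2) μ := by
      refine .of_bound (by fun_prop) (C * C) (.of_forall fun p => ?_)
      rw [norm_mul]
      exact mul_le_mul (hC _) (hC _) (norm_nonneg _) hC0
    have h2 : Integrable (fun p : EuclideanSpace ℝ (Fin n) × EuclideanSpace ℝ (Fin n) =>
        f p.1 ^ 2) μ := by
      refine .of_bound (by fun_prop) (C ^ 2) (.of_forall fun p => ?_)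
      rw [norm_pow]
      exact pow_le_pow_left₀ (norm_nonneg _) (hC _) 2
    rw [integral_sub h1 h2, integral_prod_mul, integral_fun_fst (fun x => f x ^ 2)]
    simp [sq]
  have hint := integrable_fderiv_interpolation hf1 hC hD 0 (Real.pi / 2)
  have hswap := intervalIntegral_integral_swap (μ := μ) (a := 0) (b := Real.pi / 2)
    (f := fun θ p => f p.1 * fderiv ℝ f (Real.cos θ • p.1 + Real.sin θ • p.2)
      (-Real.sin θ • p.1 + Real.cos θ • p.2)) hint
  simp_rw [integral_fderiv_interpolation hf1] at hswap
  rw [hvar] at hswap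
  have hle : ∫ θ in (0 : ℝ)..Real.pi / 2, -Real.sin θ * A
      ≤ ∫ θ in (0 : ℝ)..Real.pi / 2, ∫ p, f p.1 * fderiv ℝ f
        (Real.cos θ • p.1 + Real.sin θ • p.2) (-Real.sin θ • p.1 + Real.cos θ • p.2) ∂μ := by
    refine intervalIntegral.integral_mono_on (by positivity)
      ((by fun_prop : Continuous fun θ => -Real.sin θ * A).intervalIntegrable _ _) ?_ fun θ hθ => ?_
    · rw [intervalIntegrable_iff]
      exact hint.integral_prod_left
    · rw [integral_mul_fderiv_rotation_gaussian hf1 hC hD]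
      refine mul_le_mul_of_nonpos_left (integral_fderiv_gradient_gaussian_le hf1 hD θ) ?_
      exact neg_nonpos.2 (Real.sin_nonneg_of_nonneg_of_le_pi hθ.1
        (hθ.2.trans (by linarith [Real.pi_pos])))
  have hsin : ∫ θ in (0 : ℝ)..Real.pi / 2, -Real.sin θ * A = -A := by
    simp
  linarith
end

section
/- Logarithmic Sobolev inequality for the Gaussian measure: for every smooth, strictly positive function f on ℝⁿ (with suitable integrability), Ent_γ(f) := ∫ f log(f / ∫f dγ) dγ ≤ (1/2) ∫ |∇f|²/f dγ. -/
open MeasureTheory Real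

open ProbabilityTheory Filter Topology

theorem hasDerivAt_integral_Iic {p : ℝ → ℝ} (hc : Continuous p) (hi : Integrable p) (x : ℝ) :
    HasDerivAt (fun x => ∫ t in Set.Iic x, p t) (p x) x := by
  have h1 : (fun x => ∫ t in Set.Iic x, p t)
      = fun x => (∫ t in (0 : ℝ)..x, p t) + ∫ t in Set.Iic 0, p t := by
    ext x
    rw [← intervalIntegral.integral_Iic_sub_Iic hi.integrableOn hi.integrableOn]
    ring
  rw [h1]
  exact (intervalIntegral.integral_hasDerivAt_right (hc.intervalIntegrable _ _)
    (hc.stronglyMeasurableAtFilter _ _) hc.continuousAt).add_const _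

theorem setIntegral_pos_of_forall_pos {p : ℝ → ℝ} (hpos : ∀ x, 0 < p x) (hi : Integrable p)
    {s : Set ℝ} (hs : 0 < volume s) : 0 < ∫ t in s, p t := by
  rw [integral_pos_iff_support_of_nonneg (fun x => (hpos x).le) hi.integrableOn]
  have : Function.support p = Set.univ := by
    ext x; simp [(hpos x).ne']
  simpa [this] using hs

theorem strictMono_integral_Iic {p : ℝ → ℝ} (hpos : ∀ x, 0 < p x) (hi : Integrable p) :
    StrictMono (fun x => ∫ t in Set.Iic x, p t) := by
  intro a b hab
  have h := intervalIntegral.integral_Iic_sub_Iic (μ := volume) (a := a) (b := b)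
    hi.integrableOn hi.integrableOn
  rw [intervalIntegral.integral_of_le hab.le] at h
  have := setIntegral_pos_of_forall_pos hpos hi (s := Set.Ioc a b) (by simpa using hab)
  simp only
  linarith

theorem range_integral_Iic {p : ℝ → ℝ} (hc : Continuous p) (hpos : ∀ x, 0 < p x)
    (hi : Integrable p) :
    Set.range (fun x => ∫ t in Set.Iic x, p t) = Set.Ioo 0 (∫ t, p t) := by
  have hcont : Continuous (fun x => ∫ t in Set.Iic x, p t) :=
    continuous_iff_continuousAt.2 fun x => (hasDerivAt_integral_Iic hc hi x).continuousAt
  have hadd : ∀ x, (∫ t in Set.Iic x, p t) + ∫ t in Set.Ioi x, p t = ∫ t, p t := fun x => by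
    rw [← Set.compl_Iic]; exact integral_add_compl measurableSet_Iic hi
  apply Set.Subset.antisymm
  · rintro _ ⟨x, rfl⟩
    refine ⟨setIntegral_pos_of_forall_pos hpos hi (by simp), ?_⟩
    have := setIntegral_pos_of_forall_pos hpos hi (s := Set.Ioi x) (by simp)
    have := hadd x
    simp only
    linarith
  · rintro y ⟨hy0, hy1⟩
    have htop : Tendsto (fun x => ∫ t in Set.Iic x, p t) atTop (𝓝 (∫ t, p t)) :=
      (aecover_Iic tendsto_id).integral_tendsto_of_countably_generated hi
    have htop' : Tendsto (fun x => ∫ t in Set.Ioi x, p t) atBot (𝓝 (∫ t, p t)) :=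
      (aecover_Ioi tendsto_id).integral_tendsto_of_countably_generated hi
    have hbot : Tendsto (fun x => ∫ t in Set.Iic x, p t) atBot (𝓝 0) := by
      have h := htop'.const_sub (∫ t, p t)
      rw [sub_self] at h
      exact h.congr fun x => by linarith [hadd x]
    exact mem_range_of_exists_le_of_exists_ge hcont
      ((hbot.eventually (ge_mem_nhds hy0)).exists)
      ((htop.eventually (le_mem_nhds hy1)).exists)

/-- The monotone transport between two positive continuous densities of equal mass. -/
theorem exists_hasDerivAt_transport {p q : ℝ → ℝ} (hpc : Continuous p) (hp : ∀ x, 0 < p x)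
    (hpi : Integrable p) (hqc : Continuous q) (hq : ∀ x, 0 < q x) (hqi : Integrable q)
    (hpq : ∫ t, p t = ∫ t, q t) :
    ∃ T : ℝ → ℝ, ∀ x, HasDerivAt T (p x / q (T x)) x := by
  have hrange := range_integral_Iic hqc hq hqi
  have hemb : IsOpenEmbedding (fun x => ∫ t in Set.Iic x, q t) := by
    refine ⟨(strictMono_integral_Iic hq hqi).isEmbedding_of_ordConnected ?_, ?_⟩
    · rw [hrange]; exact Set.ordConnected_Ioo
    · rw [hrange]; exact isOpen_Ioo
  let e := hemb.toOpenPartialHomeomorph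
  refine ⟨fun x => e.symm (∫ t in Set.Iic x, p t), fun x => ?_⟩
  have hmem : (∫ t in Set.Iic x, p t) ∈ e.target := by
    have : (∫ t in Set.Iic x, p t) ∈ Set.range (fun x => ∫ t in Set.Iic x, q t) := by
      rw [hrange, ← hpq, ← range_integral_Iic hpc hp hpi]
      exact ⟨x, rfl⟩
    simpa [e] using this
  have h := (e.hasDerivAt_symm hmem (hq _).ne' (hasDerivAt_integral_Iic hqc hqi _)).comp x
    (hasDerivAt_integral_Iic hpc hpi x)
  rw [div_eq_inv_mul]
  exact h

theorem hasDerivAt_gaussianPDFReal (x : ℝ) :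
    HasDerivAt (gaussianPDFReal 0 1) (-x * gaussianPDFReal 0 1 x) x := by
  have h : HasDerivAt (fun x : ℝ => (√(2 * π * (1 : NNReal)))⁻¹
      * rexp (-(x - 0) ^ 2 / (2 * (1 : NNReal)))) _ x :=
    ((((((hasDerivAt_id x).sub_const 0).pow 2).neg).div_const
      (2 * ((1 : NNReal) : ℝ))).exp).const_mul _
  rw [gaussianPDFReal_def]
  refine h.congr_deriv ?_
  simp
  ring

theorem continuous_gaussianPDFReal : Continuous (gaussianPDFReal 0 1) :=
  continuous_iff_continuousAt.2 fun x => (hasDerivAt_gaussianPDFReal x).continuousAt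

theorem log_gaussianPDFReal (x : ℝ) :
    log (gaussianPDFReal 0 1 x) = log (√(2 * π))⁻¹ - x ^ 2 / 2 := by
  rw [gaussianPDFReal_def]
  simp only [NNReal.coe_one, mul_one, sub_zero]
  rw [log_mul (by positivity) (by positivity), log_exp]
  ring

/-- A positive function on the line cannot eventually decrease at a rate bounded below. -/
theorem exists_ge_neg_lt_of_hasDerivAt {g g' : ℝ → ℝ} (hg : ∀ x, HasDerivAt g (g' x) x)
    (hpos : ∀ x, 0 < g x) {ε : ℝ} (hε : 0 < ε) (B : ℝ) : ∃ b ≥ B, -g' b < ε := by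
  by_contra! hcon
  set b := B + (g B + 1) / ε with hb
  have hlt : B < b := by
    have := hpos B
    rw [hb]
    have : 0 < (g B + 1) / ε := by positivity
    linarith
  obtain ⟨c, hc, hceq⟩ := exists_hasDerivAt_eq_slope g g' hlt
    (fun x _ => (hg x).continuousAt.continuousWithinAt) fun x _ => hg x
  have h1 := hcon c hc.1.le
  rw [hceq] at h1
  have h2 : b - B = (g B + 1) / ε := by rw [hb]; ring
  have h3 : (b - B) * ε = g B + 1 := by rw [h2]; field_simp
  have h4 : 0 < b - B := by linarith
  rw [← neg_div, le_div_iff₀ h4] at h1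
  have := hpos b
  nlinarith

theorem mul_log_le_of_transport {f f' φ T T' x : ℝ} (hf : 0 < f) (hφ : 0 < φ) (hT' : 0 < T')
    (hlog : log f = (x ^ 2 - T ^ 2) / 2 + log T') :
    f * log f * φ - 1 / 2 * (f' ^ 2 / f) * φ
      ≤ (f' * φ + f * (-x * φ)) * (T - x) + f * φ * (T' - 1) := by
  have h1 : log T' ≤ T' - 1 := log_le_sub_one_of_pos hT'
  have h2 : f * log f ≤ f * ((x ^ 2 - T ^ 2) / 2 + (T' - 1)) := by
    rw [hlog]; gcongr
  have h3 : 0 ≤ 1 / 2 * ((f' + f * (T - x)) ^ 2 / f) := by positivity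
  have h4 : 1 / 2 * ((f' + f * (T - x)) ^ 2 / f)
      = 1 / 2 * (f' ^ 2 / f) + f' * (T - x) + f * (T - x) ^ 2 / 2 := by
    field_simp; ring
  have h5 : f * log f - 1 / 2 * (f' ^ 2 / f)
      ≤ (f' + f * (-x)) * (T - x) + f * (T' - 1) := by nlinarith
  nlinarith [mul_le_mul_of_nonneg_right h5 hφ.le]

/-- One-dimensional Gaussian logarithmic Sobolev inequality for probability densities, with
respect to Lebesgue measure. -/
theorem integral_mul_log_mul_gaussianPDFReal_le {f f' : ℝ → ℝ} (hf : ∀ x, HasDerivAt f (f' x) x)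
    (hf' : Continuous f') (hpos : ∀ x, 0 < f x)
    (hi : Integrable fun x => f x * gaussianPDFReal 0 1 x)
    (hone : ∫ x, f x * gaussianPDFReal 0 1 x = 1)
    (hH : Integrable fun x => f x * log (f x) * gaussianPDFReal 0 1 x
      - 1 / 2 * (f' x ^ 2 / f x) * gaussianPDFReal 0 1 x) :
    ∫ x, (f x * log (f x) * gaussianPDFReal 0 1 x
      - 1 / 2 * (f' x ^ 2 / f x) * gaussianPDFReal 0 1 x) ≤ 0 := by
  set φ := gaussianPDFReal 0 1 with hφdef
  have hφ : ∀ x, 0 < φ x := fun x => gaussianPDFReal_pos 0 1 x one_ne_zero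
  have hφd : ∀ x, HasDerivAt φ (-x * φ x) x := hasDerivAt_gaussianPDFReal
  have hφc : Continuous φ := continuous_gaussianPDFReal
  have hfc : Continuous f := continuous_iff_continuousAt.2 fun x => (hf x).continuousAt
  obtain ⟨T, hT⟩ := exists_hasDerivAt_transport (hfc.mul hφc)
    (fun x => mul_pos (hpos x) (hφ x)) hi hφc hφ (integrable_gaussianPDFReal 0 1)
    (by rw [integral_gaussianPDFReal_eq_one 0 one_ne_zero]; exact hone)
  have hTc : Continuous T := continuous_iff_continuousAt.2 fun x => (hT x).continuousAt
  have hT' : ∀ x, 0 < f x * φ x / φ (T x) := fun x =>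
    div_pos (mul_pos (hpos x) (hφ x)) (hφ _)
  have hT'c : Continuous fun x => f x * φ x / φ (T x) :=
    (hfc.mul hφc).div (hφc.comp hTc) fun x => (hφ _).ne'
  have hlog : ∀ x, log (f x) = (x ^ 2 - T x ^ 2) / 2 + log (f x * φ x / φ (T x)) := fun x => by
    rw [log_div (mul_pos (hpos x) (hφ x)).ne' (hφ _).ne', log_mul (hpos x).ne' (hφ x).ne',
      hφdef, log_gaussianPDFReal, log_gaussianPDFReal]
    ring
  have hG : ∀ x, HasDerivAt (fun x => f x * φ x * (T x - x))
      ((f' x * φ x + f x * (-x * φ x)) * (T x - x) + f x * φ x * (f x * φ x / φ (T x) - 1)) x :=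
    fun x => ((hf x).mul (hφd x)).mul ((hT x).sub (hasDerivAt_id x))
  have hφT : ∀ x, HasDerivAt (fun x => φ (T x)) (-(f x * φ x * T x)) x := fun x => by
    refine ((hφd (T x)).comp x (hT x)).congr_deriv ?_
    have := (hφ (T x)).ne'
    simp only [Pi.mul_apply]
    field_simp
  have hφT' : ∀ x, HasDerivAt (fun x => φ (T (-x))) (f (-x) * φ (-x) * T (-x)) x := fun x => by
    refine ((hφT (-x)).comp x (hasDerivAt_neg x)).congr_deriv ?_
    ring
  have hbound : ∀ a b, a ≤ b → ∫ x in a..b, (f x * log (f x) * φ x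
      - 1 / 2 * (f' x ^ 2 / f x) * φ x) ≤ f b * φ b * (T b - b) - f a * φ a * (T a - a) := by
    intro a b hab
    have hcont : Continuous fun x => (f' x * φ x + f x * (-x * φ x)) * (T x - x)
        + f x * φ x * (f x * φ x / φ (T x) - 1) := by fun_prop
    rw [← intervalIntegral.integral_eq_sub_of_hasDerivAt (fun x _ => hG x)
      (hcont.intervalIntegrable _ _)]
    exact intervalIntegral.integral_mono_on hab hH.intervalIntegrable
      (hcont.intervalIntegrable _ _)
      fun x _ => mul_log_le_of_transport (hpos x) (hφ x) (hT' x) (hlog x)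
  have hlim := intervalIntegral_tendsto_integral hH tendsto_fst (tendsto_snd (f := atBot (α := ℝ)))
  by_contra! hcon
  obtain ⟨pa, ha, pb, hb, hab⟩ := (eventually_prod_iff.1 (hlim.eventually (lt_mem_nhds
    (half_lt_self hcon))))
  obtain ⟨A, hA⟩ := eventually_atBot.1 (ha.and (eventually_le_atBot 0))
  obtain ⟨B, hB⟩ := eventually_atTop.1 (hb.and (eventually_ge_atTop 0))
  set J := ∫ x, (f x * log (f x) * φ x - 1 / 2 * (f' x ^ 2 / f x) * φ x)
  obtain ⟨b, hbB, hbε⟩ := exists_ge_neg_lt_of_hasDerivAt hφT (fun x => hφ _)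
    (show 0 < J / 4 by positivity) B
  obtain ⟨c, hcA, hcε⟩ := exists_ge_neg_lt_of_hasDerivAt hφT' (fun x => hφ _)
    (show 0 < J / 4 by positivity) (-A)
  have hc' := hA (-c) (by linarith)
  have hb' := hB b hbB
  have h1 := hab hc'.1 hb'.1
  have h2 := hbound (-c) b (hc'.2.trans hb'.2)
  have h3 : 0 ≤ f b * φ b * b := mul_nonneg (mul_pos (hpos b) (hφ b)).le hb'.2
  have h4 : f (-c) * φ (-c) * (-c) ≤ 0 :=
    mul_nonpos_of_nonneg_of_nonpos (mul_pos (hpos _) (hφ _)).le hc'.2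
  simp only at h1
  nlinarith

theorem integral_pos_of_forall_pos {X : Type*} [MeasurableSpace X] {μ : Measure X}
    [IsProbabilityMeasure μ] {f : X → ℝ} (hpos : ∀ x, 0 < f x) (hi : Integrable f μ) :
    0 < ∫ x, f x ∂μ := by
  rw [integral_pos_iff_support_of_nonneg (fun x => (hpos x).le) hi]
  have : Function.support f = Set.univ := by
    ext x; simp [(hpos x).ne']
  simp [this]

theorem logSobolev_gaussianReal {f f' : ℝ → ℝ}
    (hf : ∀ x, HasDerivAt f (f' x) x) (hf' : Continuous f') (hpos : ∀ x, 0 < f x)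
    (hi1 : Integrable f (gaussianReal 0 1))
    (hi2 : Integrable (fun x => f x * log (f x)) (gaussianReal 0 1))
    (hi3 : Integrable (fun x => f' x ^ 2 / f x) (gaussianReal 0 1)) :
    ∫ x, f x * log (f x) ∂(gaussianReal 0 1)
        - (∫ x, f x ∂(gaussianReal 0 1)) * log (∫ x, f x ∂(gaussianReal 0 1))
      ≤ 1 / 2 * ∫ x, f' x ^ 2 / f x ∂(gaussianReal 0 1) := by
  have hintegrable : ∀ g : ℝ → ℝ, Integrable g (gaussianReal 0 1) →
      Integrable fun x => g x * gaussianPDFReal 0 1 x := fun g hg => by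
    rw [gaussianReal_of_var_ne_zero 0 one_ne_zero,
      integrable_withDensity_iff_integrable_smul' (measurable_gaussianPDF 0 1)
        (ae_of_all _ fun x => gaussianPDF_lt_top)] at hg
    simpa [mul_comm] using hg
  have heq : ∀ g : ℝ → ℝ, ∫ x, g x ∂(gaussianReal 0 1) = ∫ x, g x * gaussianPDFReal 0 1 x :=
    fun g => by
      rw [integral_gaussianReal_eq_integral_smul one_ne_zero]
      simp [mul_comm]
  set m := ∫ x, f x ∂(gaussianReal 0 1) with hm
  have hm0 : 0 < m := integral_pos_of_forall_pos hpos hi1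
  have hlog : ∀ x, f x / m * log (f x / m) = m⁻¹ * (f x * log (f x)) - (log m / m) * f x :=
    fun x => by
      rw [log_div (hpos x).ne' hm0.ne']; field_simp
  have hfish : ∀ x, (f' x / m) ^ 2 / (f x / m) = m⁻¹ * (f' x ^ 2 / f x) := fun x => by
    have := (hpos x).ne'
    field_simp
  have hA : Integrable (fun x => m⁻¹ * (f x * log (f x)) - log m / m * f x) (gaussianReal 0 1) :=
    (hi2.const_mul _).sub (hi1.const_mul _)
  have hI : Integrable (fun x => f x / m * log (f x / m)
      - 1 / 2 * ((f' x / m) ^ 2 / (f x / m))) (gaussianReal 0 1) := by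
    simp only [hlog, hfish]
    exact hA.sub ((hi3.const_mul _).const_mul _)
  have key := integral_mul_log_mul_gaussianPDFReal_le (f := fun x => f x / m)
    (f' := fun x => f' x / m) (fun x => (hf x).div_const m) (by fun_prop)
    (fun x => div_pos (hpos x) hm0) (hintegrable _ (hi1.div_const m))
    (by rw [← heq, integral_div, ← hm, div_self hm0.ne'])
    (by simpa only [sub_mul] using hintegrable _ hI)
  simp only [← sub_mul] at key
  rw [← heq] at key
  simp only [hlog, hfish] at key
  rw [integral_sub hA ((hi3.const_mul _).const_mul _),
    integral_sub (hi2.const_mul _) (hi1.const_mul _), integral_const_mul, integral_const_mul,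
    integral_const_mul, integral_const_mul, ← hm] at key
  have : m * (m⁻¹ * ∫ x, f x * log (f x) ∂(gaussianReal 0 1) - log m / m * m
    - 1 / 2 * (m⁻¹ * ∫ x, f' x ^ 2 / f x ∂(gaussianReal 0 1))) ≤ 0 :=
    mul_nonpos_of_nonneg_of_nonpos hm0.le key
  field_simp at this
  linarith

theorem integrable_marginal_mul_log {X Y : Type*} [MeasurableSpace X] [MeasurableSpace Y]
    {μ : Measure X} {ν : Measure Y} [IsProbabilityMeasure μ] [IsProbabilityMeasure ν]
    {f : X × Y → ℝ} (hpos : ∀ z, 0 < f z) (hi : Integrable f (μ.prod ν))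
    (hil : Integrable (fun z => f z * log (f z)) (μ.prod ν)) :
    Integrable (fun x => (∫ y, f (x, y) ∂ν) * log (∫ y, f (x, y) ∂ν)) μ := by
  have hg := hi.integral_prod_left
  refine (hil.integral_prod_left.abs.add (integrable_const 1)).mono'
    (continuous_mul_log.comp_aestronglyMeasurable hg.aestronglyMeasurable) ?_
  filter_upwards [hi.prod_right_ae, hil.prod_right_ae] with x hx hxl
  have hjensen := convexOn_mul_log.map_integral_le (μ := ν) (f := fun y => f (x, y))
    continuous_mul_log.continuousOn isClosed_Ici (ae_of_all _ fun y => (hpos (x, y)).le) hx hxl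
  have hnn : 0 ≤ ∫ y, f (x, y) ∂ν := integral_nonneg fun y => (hpos (x, y)).le
  simp only [Pi.add_apply, norm_eq_abs] at hjensen ⊢
  set c := ∫ y, f (x, y) ∂ν
  have hlow : -1 ≤ c * log c := by
    rcases hnn.eq_or_lt with h0 | h0
    · simp [← h0]
    · have h1 := mul_le_mul_of_nonneg_left (one_sub_inv_le_log_of_pos h0) hnn
      rw [mul_sub, mul_inv_cancel₀ h0.ne'] at h1
      linarith
  rw [abs_le]
  constructor
  · linarith [abs_nonneg (∫ y, f (x, y) * log (f (x, y)) ∂ν)]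
  · linarith [le_abs_self (∫ y, f (x, y) * log (f (x, y)) ∂ν)]

theorem integrable_mul_log_marginal {X Y : Type*} [MeasurableSpace X] [MeasurableSpace Y]
    {μ : Measure X} {ν : Measure Y} [IsProbabilityMeasure μ] [IsProbabilityMeasure ν]
    {f : X × Y → ℝ} (hpos : ∀ z, 0 < f z) (hi : Integrable f (μ.prod ν))
    (hil : Integrable (fun z => f z * log (f z)) (μ.prod ν)) :
    Integrable (fun z => f z * log (∫ y, f (z.1, y) ∂ν)) (μ.prod ν) := by
  have hmeas : AEStronglyMeasurable (fun z : X × Y => log (∫ y, f (z.1, y) ∂ν)) (μ.prod ν) :=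
    (measurable_log.comp_aemeasurable
      hi.integral_prod_left.aemeasurable).aestronglyMeasurable.comp_fst
  have hmul : AEStronglyMeasurable (fun z => f z * log (∫ y, f (z.1, y) ∂ν)) (μ.prod ν) :=
    hi.aestronglyMeasurable.mul hmeas
  rw [integrable_prod_iff hmul]
  refine ⟨?_, (integrable_marginal_mul_log hpos hi hil).abs.congr (ae_of_all _ fun x => ?_)⟩
  · filter_upwards [hi.prod_right_ae] with x hx using hx.mul_const _
  · have hnn : 0 ≤ ∫ y, f (x, y) ∂ν := integral_nonneg fun y => (hpos (x, y)).le
    simp only [norm_mul, norm_eq_abs, abs_of_pos (hpos _), abs_mul, abs_of_nonneg hnn]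
    rw [integral_mul_const]

theorem integral_mul_log_marginal {X Y : Type*} [MeasurableSpace X] [MeasurableSpace Y]
    {μ : Measure X} {ν : Measure Y} [IsProbabilityMeasure μ] [IsProbabilityMeasure ν]
    {f : X × Y → ℝ} (hpos : ∀ z, 0 < f z) (hi : Integrable f (μ.prod ν))
    (hil : Integrable (fun z => f z * log (f z)) (μ.prod ν)) :
    ∫ z, f z * log (∫ y, f (z.1, y) ∂ν) ∂(μ.prod ν)
      = ∫ x, (∫ y, f (x, y) ∂ν) * log (∫ y, f (x, y) ∂ν) ∂μ := by
  rw [integral_prod _ (integrable_mul_log_marginal hpos hi hil)]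
  simp only [integral_mul_const]

/-- Subadditivity of entropy on a product of two probability spaces: the sum of the marginal
entropies is at most the joint one. -/
theorem integral_marginal_mul_log_add_le {X Y : Type*} [MeasurableSpace X] [MeasurableSpace Y]
    {μ : Measure X} {ν : Measure Y} [IsProbabilityMeasure μ] [IsProbabilityMeasure ν]
    {f : X × Y → ℝ} (hpos : ∀ z, 0 < f z) (hi : Integrable f (μ.prod ν))
    (hil : Integrable (fun z => f z * log (f z)) (μ.prod ν)) :
    ∫ x, (∫ y, f (x, y) ∂ν) * log (∫ y, f (x, y) ∂ν) ∂μ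
        + ∫ y, (∫ x, f (x, y) ∂μ) * log (∫ x, f (x, y) ∂μ) ∂ν
      ≤ ∫ z, f z * log (f z) ∂(μ.prod ν)
        + (∫ z, f z ∂(μ.prod ν)) * log (∫ z, f z ∂(μ.prod ν)) := by
  have hpos' : ∀ z : Y × X, 0 < (f ∘ Prod.swap) z := fun z => hpos _
  set m := ∫ z, f z ∂(μ.prod ν) with hm
  have hm0 : 0 < m := integral_pos_of_forall_pos hpos hi
  have hg := integrable_mul_log_marginal hpos hi hil
  have hh : Integrable (fun z => f z * log (∫ x, f (x, z.2) ∂μ)) (μ.prod ν) :=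
    (integrable_mul_log_marginal hpos' hi.swap hil.swap).swap
  have hheq : ∫ z, f z * log (∫ x, f (x, z.2) ∂μ) ∂(μ.prod ν)
      = ∫ y, (∫ x, f (x, y) ∂μ) * log (∫ x, f (x, y) ∂μ) ∂ν := by
    rw [← integral_prod_swap]
    exact integral_mul_log_marginal hpos' hi.swap hil.swap
  have hprod : Integrable (fun z : X × Y =>
      (∫ y, f (z.1, y) ∂ν) * (∫ x, f (x, z.2) ∂μ)) (μ.prod ν) :=
    hi.integral_prod_left.mul_prod hi.integral_prod_right
  have hprodeq : ∫ z, (∫ y, f (z.1, y) ∂ν) * (∫ x, f (x, z.2) ∂μ) ∂(μ.prod ν) = m * m := by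
    rw [integral_prod_mul (fun x => ∫ y, f (x, y) ∂ν) (fun y => ∫ x, f (x, y) ∂μ),
      ← integral_prod _ hi, ← integral_prod_symm _ hi]
  have hle : (fun z => f z * log (∫ y, f (z.1, y) ∂ν) + f z * log (∫ x, f (x, z.2) ∂μ))
      ≤ᵐ[μ.prod ν] fun z => (f z * log (f z) + (log m - 1) * f z)
        + m⁻¹ * ((∫ y, f (z.1, y) ∂ν) * (∫ x, f (x, z.2) ∂μ)) := by
    filter_upwards [Measure.quasiMeasurePreserving_fst.ae hi.prod_right_ae,
      Measure.quasiMeasurePreserving_snd.ae hi.prod_left_ae] with z h1 h2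
    have hg0 : 0 < ∫ y, f (z.1, y) ∂ν := integral_pos_of_forall_pos (fun y => hpos _) h1
    have hh0 : 0 < ∫ x, f (x, z.2) ∂μ := integral_pos_of_forall_pos (fun x => hpos _) h2
    set a := ∫ y, f (z.1, y) ∂ν
    set b := ∫ x, f (x, z.2) ∂μ
    have hz := hpos z
    have h := log_le_sub_one_of_pos (show 0 < a * b / (m * f z) by positivity)
    rw [log_div (by positivity) (by positivity), log_mul hg0.ne' hh0.ne',
      log_mul hm0.ne' hz.ne'] at h
    have h' := mul_le_mul_of_nonneg_left h hz.le
    have he : f z * (a * b / (m * f z) - 1) = m⁻¹ * (a * b) - f z := by field_simp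
    rw [he] at h'
    linarith
  have hfl : Integrable (fun z => f z * log (f z) + (log m - 1) * f z) (μ.prod ν) :=
    hil.add (hi.const_mul _)
  have h := integral_mono_ae (hg.add hh) (hfl.add (hprod.const_mul _)) hle
  rw [integral_add' hg hh, integral_add' hfl (hprod.const_mul _), integral_add hil (hi.const_mul _),
    integral_const_mul, integral_const_mul, hprodeq, hheq, integral_mul_log_marginal hpos hi hil,
    ← hm] at h
  have he : m⁻¹ * (m * m) = m := by field_simp
  rw [he] at h
  linarith

theorem logSobolev_pi_gaussianReal (n : ℕ) (f : (Fin n → ℝ) → ℝ)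
    (hf : ∀ x i, ContDiff ℝ 1 fun s => f (Function.update x i s)) (hpos : ∀ x, 0 < f x)
    (hi1 : Integrable f (Measure.pi fun _ => gaussianReal 0 1))
    (hi2 : Integrable (fun x => f x * log (f x)) (Measure.pi fun _ => gaussianReal 0 1))
    (hi3 : ∀ i, Integrable (fun x => deriv (fun s => f (Function.update x i s)) (x i) ^ 2 / f x)
      (Measure.pi fun _ => gaussianReal 0 1)) :
    ∫ x, f x * log (f x) ∂(Measure.pi fun _ => gaussianReal 0 1)
        - (∫ x, f x ∂(Measure.pi fun _ => gaussianReal 0 1))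
          * log (∫ x, f x ∂(Measure.pi fun _ => gaussianReal 0 1))
      ≤ 1 / 2 * ∑ i, ∫ x, deriv (fun s => f (Function.update x i s)) (x i) ^ 2 / f x
        ∂(Measure.pi fun _ => gaussianReal 0 1) := by
  induction n with
  | zero => simp [integral_unique]
  | succ n ih =>
    set μ := gaussianReal 0 1 with hμ
    set ν : Measure (Fin n → ℝ) := Measure.pi fun _ => μ with hν
    have hmp : MeasurePreserving (MeasurableEquiv.piFinSuccAbove (fun _ => ℝ) 0).symm
        (μ.prod ν) (Measure.pi fun _ : Fin (n + 1) => μ) :=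
      (measurePreserving_piFinSuccAbove (fun _ : Fin (n + 1) => μ) 0).symm
    have hcons : ∀ z : ℝ × (Fin n → ℝ), (MeasurableEquiv.piFinSuccAbove (fun _ => ℝ) 0).symm z
        = (Fin.cons z.1 z.2 : Fin (n + 1) → ℝ) := fun z => by
      simp [MeasurableEquiv.piFinSuccAbove_symm_apply, Fin.insertNthEquiv]
    have hintegrable : ∀ g : (Fin (n + 1) → ℝ) → ℝ, Integrable g (Measure.pi fun _ => μ) →
        Integrable (fun z : ℝ × (Fin n → ℝ) => g (Fin.cons z.1 z.2)) (μ.prod ν) := fun g hg => by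
      have := hmp.integrable_comp_of_integrable hg
      simpa only [Function.comp_def, hcons] using this
    have heq : ∀ g : (Fin (n + 1) → ℝ) → ℝ, ∫ x, g x ∂(Measure.pi fun _ => μ)
        = ∫ z : ℝ × (Fin n → ℝ), g (Fin.cons z.1 z.2) ∂(μ.prod ν) := fun g => by
      rw [← hmp.integral_comp']
      simp only [hcons]
    have hj1 := hintegrable _ hi1
    have hj2 := hintegrable _ hi2
    have hj3 := fun i => hintegrable _ (hi3 i)
    simp only [heq, Fin.sum_univ_succ]
    have hd0 : ∀ t (y : Fin n → ℝ), (fun s => f (Function.update (Fin.cons t y) 0 s))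
        = fun s => f (Fin.cons s y) := fun t y => by
      simp only [Fin.update_cons_zero]
    have hdsucc : ∀ t (y : Fin n → ℝ) (j : Fin n),
        (fun s => f (Function.update (Fin.cons t y) j.succ s))
          = fun s => f (Fin.cons t (Function.update y j s)) := fun t y j => by
      simp only [Fin.cons_update]
    have hz := hj3 0
    have hs := fun j : Fin n => hj3 j.succ
    simp only [hd0, hdsucc, Fin.cons_zero, Fin.cons_succ] at hz hs ⊢
    have hfib0 : ∀ᵐ y ∂ν, ∫ t, f (Fin.cons t y) * log (f (Fin.cons t y)) ∂μ
        - (∫ t, f (Fin.cons t y) ∂μ) * log (∫ t, f (Fin.cons t y) ∂μ)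
        ≤ 1 / 2 * ∫ t, deriv (fun s => f (Fin.cons s y)) t ^ 2 / f (Fin.cons t y) ∂μ := by
      filter_upwards [hj1.prod_left_ae, hj2.prod_left_ae, hz.prod_left_ae] with y h1 h2 h3
      have hcd : ContDiff ℝ 1 fun s => f (Fin.cons s y) := by
        have := hf (Fin.cons 0 y) 0
        rwa [hd0] at this
      exact logSobolev_gaussianReal
        (fun x => (hcd.differentiable one_ne_zero x).hasDerivAt)
        (hcd.continuous_deriv le_rfl) (fun x => hpos _) h1 h2 h3
    have hfib1 : ∀ᵐ t ∂μ, ∫ y, f (Fin.cons t y) * log (f (Fin.cons t y)) ∂ν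
        - (∫ y, f (Fin.cons t y) ∂ν) * log (∫ y, f (Fin.cons t y) ∂ν)
        ≤ 1 / 2 * ∑ j, ∫ y, deriv (fun s => f (Fin.cons t (Function.update y j s))) (y j) ^ 2
          / f (Fin.cons t y) ∂ν := by
      filter_upwards [hj1.prod_right_ae, hj2.prod_right_ae,
        ae_all_iff.2 fun j => (hs j).prod_right_ae] with t h1 h2 h3
      refine ih (fun y => f (Fin.cons t y)) (fun y j => ?_) (fun y => hpos _) h1 h2 h3
      have := hf (Fin.cons t y) j.succ
      rwa [hdsucc] at this
    have hent := integral_marginal_mul_log_add_le (fun z => hpos _) hj1 hj2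
    have hm0 := integrable_marginal_mul_log (fun z => hpos _) hj1 hj2
    have hm1 : Integrable
        (fun y => (∫ t, f (Fin.cons t y) ∂μ) * log (∫ t, f (Fin.cons t y) ∂μ)) ν :=
      integrable_marginal_mul_log (f := fun z : (Fin n → ℝ) × ℝ => f (Fin.cons z.2 z.1))
        (fun z => hpos _) hj1.swap hj2.swap
    have e0 := integral_mono_ae (hj2.integral_prod_right.sub hm1)
      (hz.integral_prod_right.const_mul (1 / 2)) hfib0
    have e1 := integral_mono_ae (hj2.integral_prod_left.sub hm0)
      ((integrable_finsetSum Finset.univ fun j _ => (hs j).integral_prod_left).const_mul (1 / 2))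
      hfib1
    rw [integral_sub' hj2.integral_prod_right hm1, integral_const_mul,
      ← integral_prod_symm _ hz, ← integral_prod_symm _ hj2] at e0
    rw [integral_sub' hj2.integral_prod_left hm0, integral_const_mul,
      integral_finsetSum _ (fun j _ => (hs j).integral_prod_left), ← integral_prod _ hj2] at e1
    simp only [fun j => (integral_prod _ (hs j)).symm] at e1
    linarith

theorem prod_gaussianPDFReal {n : ℕ} (x : Fin n → ℝ) :
    ∏ i, gaussianPDFReal 0 1 (x i)
      = (2 * π) ^ (-(n : ℝ) / 2) * rexp (-‖WithLp.toLp 2 x‖ ^ 2 / 2) := by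
  simp only [gaussianPDFReal_def, NNReal.coe_one, mul_one, sub_zero]
  rw [Finset.prod_mul_distrib, Finset.prod_const, ← exp_sum, EuclideanSpace.real_norm_sq_eq,
    Finset.card_univ, Fintype.card_fin, sqrt_eq_rpow, ← rpow_neg (by positivity),
    ← rpow_natCast, ← rpow_mul (by positivity), ← Finset.sum_div, Finset.sum_neg_distrib]
  congr 2
  ring

theorem pi_gaussianReal_eq_withDensity (n : ℕ) :
    Measure.pi (fun _ : Fin n => gaussianReal 0 1)
      = (volume : Measure (Fin n → ℝ)).withDensity
        fun x => ENNReal.ofReal (∏ i, gaussianPDFReal 0 1 (x i)) := by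
  refine Measure.pi_eq fun s hs => ?_
  have hintegrable : Integrable (fun x : Fin n → ℝ => ∏ i, gaussianPDFReal 0 1 (x i))
      (Measure.pi fun i => volume.restrict (s i)) :=
    Integrable.fintype_prod fun i => (integrable_gaussianPDFReal 0 1).restrict
  have hnn : ∀ x, 0 ≤ gaussianPDFReal 0 1 x := gaussianPDFReal_nonneg 0 1
  rw [withDensity_apply _ (MeasurableSet.univ_pi hs), volume_pi, Measure.restrict_pi_pi,
    ← ofReal_integral_eq_lintegral_ofReal hintegrable
      (ae_of_all _ fun x => Finset.prod_nonneg fun i _ => hnn _),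
    integral_fintype_prod_eq_prod (fun _ => gaussianPDFReal 0 1),
    ENNReal.ofReal_prod_of_nonneg fun i _ => integral_nonneg hnn]
  simp only [gaussianReal_apply_eq_integral 0 one_ne_zero]

theorem measurePreserving_toLp_gaussian (n : ℕ) :
    MeasurePreserving (MeasurableEquiv.toLp 2 (Fin n → ℝ))
      (Measure.pi fun _ => gaussianReal 0 1) (gaussian n) := by
  refine ⟨MeasurableEquiv.measurable _, ?_⟩
  have hvol : MeasurePreserving (MeasurableEquiv.toLp 2 (Fin n → ℝ)) :=
    PiLp.volume_preserving_toLp (Fin n)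
  ext s hs
  rw [MeasurableEquiv.map_apply, pi_gaussianReal_eq_withDensity, gaussian,
    withDensity_apply _ ((MeasurableEquiv.measurable _) hs), withDensity_apply _ hs,
    ← hvol.setLIntegral_comp_preimage_emb (MeasurableEquiv.measurableEmbedding _)]
  simp only [prod_gaussianPDFReal]
  rfl

theorem hasDerivAt_comp_toLp_update {n : ℕ} {f : EuclideanSpace ℝ (Fin n) → ℝ}
    (hf : Differentiable ℝ f) (x : Fin n → ℝ) (i : Fin n) :
    HasDerivAt (fun s => f (WithLp.toLp 2 (Function.update x i s)))
      (gradient f (WithLp.toLp 2 x) i) (x i) := by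
  have hu : HasDerivAt (fun s => WithLp.toLp 2 (Function.update x i s))
      (EuclideanSpace.single i (1 : ℝ)) (x i) :=
    (PiLp.hasFDerivAt_toLp 2 _).comp_hasDerivAt (x i) (hasDerivAt_update x i (x i))
  have hg : HasFDerivAt f (fderiv ℝ f (WithLp.toLp 2 x))
      (WithLp.toLp 2 (Function.update x i (x i))) := by
    rw [Function.update_eq_self]
    exact (hf _).hasFDerivAt
  refine (hg.comp_hasDerivAt (x i) hu).congr_deriv ?_
  rw [← inner_gradient_left, EuclideanSpace.inner_single_right]
  simp

theorem gaussian_logSobolev (n : ℕ) (f : EuclideanSpace ℝ (Fin n) → ℝ)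
    (hf : ContDiff ℝ (⊤ : ℕ∞) f) (hpos : ∀ x, 0 < f x)
    (hi1 : Integrable f (gaussian n))
    (hi2 : Integrable (fun x => f x * Real.log (f x)) (gaussian n))
    (hi3 : Integrable (fun x => ‖gradient f x‖ ^ 2 / f x) (gaussian n)) :
    ∫ x, f x * Real.log (f x / ∫ y, f y ∂(gaussian n)) ∂(gaussian n)
      ≤ (1 / 2) * ∫ x, ‖gradient f x‖ ^ 2 / f x ∂(gaussian n) := by
  have hmp := measurePreserving_toLp_gaussian n
  have : IsProbabilityMeasure (gaussian n) := by
    rw [← hmp.map_eq]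
    exact Measure.isProbabilityMeasure_map hmp.measurable.aemeasurable
  have hdiff : Differentiable ℝ f := hf.differentiable (by simp)
  have hgrad : Continuous (gradient f) :=
    (LinearIsometryEquiv.continuous _).comp (hf.continuous_fderiv (by simp))
  have hcoord : ∀ i, Integrable (fun x => gradient f x i ^ 2 / f x) (gaussian n) := fun i => by
    have hc : Continuous fun x => gradient f x i ^ 2 / f x :=
      Continuous.div (by fun_prop) hf.continuous fun x => (hpos x).ne'
    refine hi3.mono' hc.aestronglyMeasurable (ae_of_all _ fun x => ?_)
    have hx := hpos x
    rw [norm_of_nonneg (by positivity), EuclideanSpace.real_norm_sq_eq]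
    gcongr
    exact Finset.single_le_sum (f := fun j => gradient f x j ^ 2)
      (fun j _ => sq_nonneg _) (Finset.mem_univ i)
  have hderiv : ∀ (x : Fin n → ℝ) i, deriv (fun s => f (WithLp.toLp 2 (Function.update x i s)))
      (x i) = gradient f (WithLp.toLp 2 x) i :=
    fun x i => (hasDerivAt_comp_toLp_update hdiff x i).deriv
  have hintegrable : ∀ g : EuclideanSpace ℝ (Fin n) → ℝ, Integrable g (gaussian n) →
      Integrable (fun x => g (WithLp.toLp 2 x)) (Measure.pi fun _ => gaussianReal 0 1) :=
    fun g hg => hmp.integrable_comp_of_integrable hg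
  have heq : ∀ g : EuclideanSpace ℝ (Fin n) → ℝ, ∫ x, g (WithLp.toLp 2 x)
      ∂(Measure.pi fun _ => gaussianReal 0 1) = ∫ x, g x ∂(gaussian n) :=
    fun g => hmp.integral_comp' g
  have key := logSobolev_pi_gaussianReal n (fun x => f (WithLp.toLp 2 x))
    (fun x i => (hf.of_le (by simp)).comp
      ((PiLp.contDiff_toLp (p := 2)).comp (contDiff_update 1 x i)))
    (fun x => hpos _) (hintegrable _ hi1) (hintegrable _ hi2)
    (fun i => by simpa only [hderiv] using hintegrable _ (hcoord i))
  simp only [hderiv] at key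
  simp only [heq, heq (fun x => f x * log (f x)),
    fun i => heq (fun x => gradient f x i ^ 2 / f x)] at key
  rw [← integral_finsetSum _ fun i _ => hcoord i] at key
  simp only [← Finset.sum_div, ← EuclideanSpace.real_norm_sq_eq] at key
  have hm0 := integral_pos_of_forall_pos hpos hi1
  simp only [fun x => log_div (hpos x).ne' hm0.ne', mul_sub]
  rw [integral_sub hi2 (hi1.mul_const _), integral_mul_const]
  exact key
end

section
/- Bakry-Emery theorem: if ψ ∈ C²(ℝⁿ) satisfies Hess(ψ)(x) ≥ ρ Id for all x with ρ > 0 and ∫ e^{-ψ} dx < ∞, then the probability measure dμ_ψ = e^{-ψ} dx / Z_ψ satisfies the logarithmic Sobolev inequality Ent_{μ_ψ}(f) ≤ (1/(2ρ)) ∫ |∇f|²/f dμ_ψ for all smooth positive f. -/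
open MeasureTheory Real

noncomputable def hess (n : ℕ) (f : EuclideanSpace ℝ (Fin n) → ℝ)
    (x : EuclideanSpace ℝ (Fin n)) (i j : Fin n) : ℝ :=
  iteratedFDeriv ℝ 2 f x ![EuclideanSpace.single i 1, EuclideanSpace.single j 1]

section PrekopaLeindler

open scoped ENNReal

/-- One-dimensional Brunn-Minkowski inequality for compact sets. -/
theorem volume_add_volume_le_of_isCompact {K L C : Set ℝ} (hK : IsCompact K) (hL : IsCompact L)
    (hK₀ : K.Nonempty) (hL₀ : L.Nonempty) (hC : ∀ x ∈ K, ∀ y ∈ L, x + y ∈ C) :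
    volume K + volume L ≤ volume C := by
  have hM := hK.sSup_mem hK₀
  have hm := hL.sInf_mem hL₀
  set M := sSup K
  set m := sInf L
  have h1 : volume ((fun x => -m + x) ⁻¹' K) = volume K := measure_preimage_add _ _ _
  have h2 : volume ((fun x => -M + x) ⁻¹' L) = volume L := measure_preimage_add _ _ _
  rw [← h1, ← h2, ← measure_union₀]
  · apply measure_mono
    rintro x (hx | hx)
    · simpa using hC _ hx _ hm
    · simpa using hC _ hM _ hx
  · exact (hL.measurableSet.preimage (by fun_prop)).nullMeasurableSet
  · refine measure_mono_null (t := {M + m}) ?_ (by simp)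
    rintro x ⟨hx, hy⟩
    have := le_csSup hK.bddAbove hx
    have := csInf_le hL.bddBelow hy
    simp only [Set.mem_singleton_iff]
    linarith

/-- One-dimensional Brunn-Minkowski inequality. -/
theorem volume_add_volume_le {A B C : Set ℝ} (hA : MeasurableSet A) (hB : MeasurableSet B)
    (hA₀ : A.Nonempty) (hB₀ : B.Nonempty) (hC : ∀ x ∈ A, ∀ y ∈ B, x + y ∈ C) :
    volume A + volume B ≤ volume C := by
  obtain ⟨a, ha⟩ := hA₀
  obtain ⟨b, hb⟩ := hB₀
  rw [hA.measure_eq_iSup_isCompact, hB.measure_eq_iSup_isCompact]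
  simp only [iSup_and']
  refine ENNReal.biSup_add_biSup_le' (f := volume) (g := volume)
    ⟨∅, by simp, by simp⟩ ⟨∅, by simp, by simp⟩ ?_
  rintro K ⟨hKA, hK⟩ L ⟨hLB, hL⟩
  calc volume K + volume L ≤ volume (insert a K) + volume (insert b L) := by
        gcongr <;> exact Set.subset_insert _ _
    _ ≤ volume C := by
        refine volume_add_volume_le_of_isCompact (hK.insert a) (hL.insert b)
          (Set.insert_nonempty _ _) (Set.insert_nonempty _ _) fun x hx y hy =>
          hC x (Set.insert_subset ha hKA hx) y (Set.insert_subset hb hLB hy)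

theorem lintegral_eq_setLIntegral_Ioo_of_le_one {u : ℝ → ℝ≥0∞} (hu : Measurable u)
    (hu1 : ∀ x, u x ≤ 1) :
    ∫⁻ x, u x = ∫⁻ r in Set.Ioo (0 : ℝ) 1, volume {x | ENNReal.ofReal r < u x} := by
  have hfin : ∀ x, u x ≠ ∞ := fun x => ((hu1 x).trans_lt ENNReal.one_lt_top).ne
  calc ∫⁻ x, u x = ∫⁻ x, ENNReal.ofReal (u x).toReal := by
        simp only [ENNReal.ofReal_toReal (hfin _)]
    _ = ∫⁻ r in Set.Ioi (0 : ℝ), volume {x | r < (u x).toReal} :=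
        lintegral_eq_lintegral_meas_lt _
          (Filter.Eventually.of_forall fun x => ENNReal.toReal_nonneg)
          hu.ennreal_toReal.aemeasurable
    _ = ∫⁻ r in Set.Ioi (0 : ℝ),
          (Set.Iio 1).indicator (fun r => volume {x | ENNReal.ofReal r < u x}) r := by
        refine setLIntegral_congr_fun measurableSet_Ioi fun r hr => ?_
        have hset : {x | r < (u x).toReal} = {x | ENNReal.ofReal r < u x} := by
          ext x
          exact (ENNReal.ofReal_lt_iff_lt_toReal (le_of_lt hr) (hfin x)).symm
        by_cases h1 : r < 1
        · simp [h1, hset]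
        · have : {x | r < (u x).toReal} = ∅ := by
            ext x
            have := ENNReal.toReal_mono ENNReal.one_ne_top (hu1 x)
            simp only [ENNReal.toReal_one] at this
            simp only [Set.mem_ofPred_eq, Set.mem_empty_iff_false, iff_false, not_lt]
            linarith
          simp [h1, this]
    _ = _ := by rw [setLIntegral_indicator measurableSet_Iio, Set.Iio_inter_Ioi]

/-- Superlevel-set form of the one-dimensional Prékopa-Leindler inequality. -/
theorem add_lintegral_le_of_min_le {t s : ℝ} (ht : 0 < t) (hs : 0 < s)
    {u v w : ℝ → ℝ≥0∞} (hu : Measurable u) (hv : Measurable v) (hw : Measurable w)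
    (hu1 : ⨆ x, u x = 1) (hv1 : ⨆ x, v x = 1)
    (h : ∀ x y, min (u x) (v y) ≤ w (t * x + s * y)) :
    ENNReal.ofReal t * (∫⁻ x, u x) + ENNReal.ofReal s * (∫⁻ x, v x) ≤ ∫⁻ x, w x := by
  have hum : ∀ x, u x ≤ 1 := fun x => hu1 ▸ le_iSup u x
  have hvm : ∀ x, v x ≤ 1 := fun x => hv1 ▸ le_iSup v x
  calc _ ≤ ∫⁻ x, min (w x) 1 := by
        rw [lintegral_eq_setLIntegral_Ioo_of_le_one hu hum,
          lintegral_eq_setLIntegral_Ioo_of_le_one hv hvm,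
          lintegral_eq_setLIntegral_Ioo_of_le_one (hw.min measurable_const)
            (fun x => min_le_right _ _),
          ← lintegral_const_mul' _ _ ENNReal.ofReal_ne_top,
          ← lintegral_const_mul' _ _ ENNReal.ofReal_ne_top]
        refine (le_lintegral_add _ _).trans ?_
        refine setLIntegral_mono' measurableSet_Ioo fun r hr => ?_
        have hr1 : ENNReal.ofReal r < 1 := by simpa using hr.2
        have hscale : ∀ (c : ℝ) (_ : 0 < c) (A : Set ℝ),
            ENNReal.ofReal c * volume A = volume ((c⁻¹ * ·) ⁻¹' A) := by
          intro c hc A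
          rw [Real.volume_preimage_mul_left (inv_ne_zero hc.ne'), inv_inv, abs_of_pos hc]
        rw [hscale t ht, hscale s hs]
        obtain ⟨x₀, hx₀⟩ := lt_iSup_iff.1 (hu1.symm ▸ hr1)
        obtain ⟨y₀, hy₀⟩ := lt_iSup_iff.1 (hv1.symm ▸ hr1)
        refine volume_add_volume_le
          ((measurableSet_lt measurable_const hu).preimage (by fun_prop))
          ((measurableSet_lt measurable_const hv).preimage (by fun_prop))
          ⟨t * x₀, by simpa [ht.ne'] using hx₀⟩ ⟨s * y₀, by simpa [hs.ne'] using hy₀⟩ ?_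
        intro x hx y hy
        have := h (t⁻¹ * x) (s⁻¹ * y)
        rw [mul_inv_cancel_left₀ ht.ne', mul_inv_cancel_left₀ hs.ne'] at this
        exact lt_min ((lt_min hx hy).trans_le this) hr1
    _ ≤ ∫⁻ x, w x := lintegral_mono fun x => min_le_left _ _

theorem ENNReal.rpow_mul_rpow_le_add {t s : ℝ} (ht : 0 < t) (hs : 0 < s) (hts : t + s = 1)
    (a b : ℝ≥0∞) : a ^ t * b ^ s ≤ ENNReal.ofReal t * a + ENNReal.ofReal s * b := by
  induction a with
  | top => simp [ENNReal.mul_top, ht]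
  | coe a =>
    induction b with
    | top => simp [ENNReal.mul_top, hs]
    | coe b =>
      rw [ENNReal.ofReal_eq_coe_nnreal ht.le, ENNReal.ofReal_eq_coe_nnreal hs.le,
        ← ENNReal.coe_rpow_of_nonneg _ ht.le, ← ENNReal.coe_rpow_of_nonneg _ hs.le]
      exact_mod_cast NNReal.geom_mean_le_arith_mean2_weighted ⟨t, ht.le⟩ ⟨s, hs.le⟩ a b
        (NNReal.eq hts)

theorem ENNReal.min_le_rpow_mul_rpow {t s : ℝ} (ht : 0 < t) (hs : 0 < s) (hts : t + s = 1)
    (a b : ℝ≥0∞) : min a b ≤ a ^ t * b ^ s := by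
  calc min a b = (min a b) ^ t * (min a b) ^ s := by
        rw [← ENNReal.rpow_add_of_nonneg _ _ ht.le hs.le, hts, ENNReal.rpow_one]
    _ ≤ a ^ t * b ^ s := by
        gcongr
        · exact min_le_left _ _
        · exact min_le_right _ _

/-- One-dimensional Prékopa-Leindler inequality for bounded functions. -/
theorem prekopa_leindler_real_of_bounded {t s : ℝ} (ht : 0 < t) (hs : 0 < s) (hts : t + s = 1)
    {u v w : ℝ → ℝ≥0∞} (hu : Measurable u) (hv : Measurable v) (hw : Measurable w)
    (hub : ⨆ x, u x ≠ ∞) (hvb : ⨆ x, v x ≠ ∞)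
    (h : ∀ x y, u x ^ t * v y ^ s ≤ w (t * x + s * y)) :
    (∫⁻ x, u x) ^ t * (∫⁻ x, v x) ^ s ≤ ∫⁻ x, w x := by
  rcases eq_or_ne (⨆ x, u x) 0 with hu0 | hu0
  · have : ∀ x, u x = 0 := by simpa using hu0
    simp [this, ht]
  rcases eq_or_ne (⨆ x, v x) 0 with hv0 | hv0
  · have : ∀ x, v x = 0 := by simpa using hv0
    simp [this, hs]
  set a := ⨆ x, u x
  set b := ⨆ x, v x
  have hat0 : a ^ t ≠ 0 := by simp [hu0, hub]
  have hbs0 : b ^ s ≠ 0 := by simp [hv0, hvb]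
  have hat : a ^ t ≠ ∞ := by simp [hub, ht.le]
  have hbs : b ^ s ≠ ∞ := by simp [hvb, hs.le]
  have key := add_lintegral_le_of_min_le ht hs (u := fun x => a⁻¹ * u x) (v := fun x => b⁻¹ * v x)
    (w := fun x => (a ^ t * b ^ s)⁻¹ * w x) (by fun_prop) (by fun_prop) (by fun_prop)
    (by rw [← ENNReal.mul_iSup]; exact ENNReal.inv_mul_cancel hu0 hub)
    (by rw [← ENNReal.mul_iSup]; exact ENNReal.inv_mul_cancel hv0 hvb) ?_
  · have := (ENNReal.rpow_mul_rpow_le_add ht hs hts _ _).trans key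
    rw [lintegral_const_mul _ hu, lintegral_const_mul _ hv, lintegral_const_mul _ hw,
      ENNReal.mul_rpow_of_nonneg _ _ ht.le, ENNReal.mul_rpow_of_nonneg _ _ hs.le,
      ENNReal.inv_rpow, ENNReal.inv_rpow, mul_mul_mul_comm,
      ← ENNReal.mul_inv (Or.inl hat0) (Or.inl hat)] at this
    exact (ENNReal.mul_le_mul_iff_right (by simp [ENNReal.mul_eq_top, hat, hbs, hat0, hbs0])
      (by simp [hat0, hbs0])).1 this
  · intro x y
    refine (ENNReal.min_le_rpow_mul_rpow ht hs hts _ _).trans ?_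
    rw [ENNReal.mul_rpow_of_nonneg _ _ ht.le, ENNReal.mul_rpow_of_nonneg _ _ hs.le,
      ENNReal.inv_rpow, ENNReal.inv_rpow, mul_mul_mul_comm,
      ← ENNReal.mul_inv (Or.inl hat0) (Or.inl hat)]
    gcongr
    exact h x y

theorem lintegral_eq_iSup_min_nat {α : Type*} [MeasurableSpace α] {μ : Measure α} {u : α → ℝ≥0∞}
    (hu : Measurable u) : ∫⁻ x, u x ∂μ = ⨆ k : ℕ, ∫⁻ x, min (u x) k ∂μ := by
  rw [← lintegral_iSup (fun k => hu.min measurable_const)]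
  · congr 1 with x
    rw [← inf_iSup_eq, ENNReal.iSup_natCast, inf_top_eq]
  · intro i j hij x
    dsimp only
    gcongr

/-- One-dimensional Prékopa-Leindler inequality. -/
theorem prekopa_leindler_real {t s : ℝ} (ht : 0 < t) (hs : 0 < s) (hts : t + s = 1)
    {u v w : ℝ → ℝ≥0∞} (hu : Measurable u) (hv : Measurable v) (hw : Measurable w)
    (h : ∀ x y, u x ^ t * v y ^ s ≤ w (t * x + s * y)) :
    (∫⁻ x, u x) ^ t * (∫⁻ x, v x) ^ s ≤ ∫⁻ x, w x := by
  have hmono : ∀ f : ℝ → ℝ≥0∞, Monotone fun k : ℕ => ∫⁻ x, min (f x) k := fun f i j hij =>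
    lintegral_mono fun x => by dsimp only; gcongr
  have hlim : ∀ (f : ℝ → ℝ≥0∞) (_ : Measurable f),
      Filter.Tendsto (fun k : ℕ => ∫⁻ x, min (f x) k) Filter.atTop (nhds (∫⁻ x, f x)) := by
    intro f hf
    rw [lintegral_eq_iSup_min_nat hf]
    exact tendsto_atTop_iSup (hmono f)
  have hpow : ∀ (f : ℝ → ℝ≥0∞) (_ : Measurable f) (r : ℝ) (_ : 0 < r),
      (∫⁻ x, f x) ^ r = ⨆ k : ℕ, (∫⁻ x, min (f x) k) ^ r := by
    intro f hf r hr
    exact tendsto_nhds_unique ((ENNReal.continuous_rpow_const.tendsto _).comp (hlim f hf))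
      (tendsto_atTop_iSup fun i j hij => by
        exact ENNReal.rpow_le_rpow (hmono f hij) hr.le)
  rw [hpow u hu t ht, hpow v hv s hs]
  simp only [ENNReal.iSup_mul, ENNReal.mul_iSup]
  refine iSup_le fun j => iSup_le fun i => ?_
  refine prekopa_leindler_real_of_bounded ht hs hts (hu.min measurable_const)
    (hv.min measurable_const) hw ?_ ?_ fun x y => le_trans ?_ (h x y)
  · exact ((iSup_le fun x => min_le_right _ _).trans_lt (ENNReal.natCast_lt_top i)).ne
  · exact ((iSup_le fun x => min_le_right _ _).trans_lt (ENNReal.natCast_lt_top j)).ne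
  · gcongr <;> exact min_le_left _ _

/-- Prékopa-Leindler inequality on `Fin n → ℝ`. -/
theorem prekopa_leindler_pi {t s : ℝ} (ht : 0 < t) (hs : 0 < s) (hts : t + s = 1) (n : ℕ)
    {u v w : (Fin n → ℝ) → ℝ≥0∞} (hu : Measurable u) (hv : Measurable v) (hw : Measurable w)
    (h : ∀ x y, u x ^ t * v y ^ s ≤ w (t • x + s • y)) :
    (∫⁻ x, u x) ^ t * (∫⁻ x, v x) ^ s ≤ ∫⁻ x, w x := by
  induction n with
  | zero =>
    simp only [lintegral_unique, volume_pi, Measure.pi_empty_univ, mul_one]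
    exact (h _ _).trans (le_of_eq (congrArg w (Subsingleton.elim _ _)))
  | succ n ih =>
    have hF : ∀ f : (Fin (n + 1) → ℝ) → ℝ≥0∞, Measurable f →
        ∫⁻ x, f x = ∫⁻ a : ℝ, ∫⁻ y : Fin n → ℝ, f (Fin.cons a y) := by
      intro f hf
      have hmp := (volume_preserving_piFinSuccAbove (fun _ : Fin (n + 1) => ℝ) 0).symm
      rw [← hmp.lintegral_comp hf, Measure.volume_eq_prod]
      refine (lintegral_prod _ (hf.comp (MeasurableEquiv.measurable _)).aemeasurable).trans ?_
      simp [Fin.insertNthEquiv]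
    have hcons : Measurable fun p : ℝ × (Fin n → ℝ) => (Fin.cons p.1 p.2 : Fin (n + 1) → ℝ) := by
      refine measurable_pi_iff.2 fun i => ?_
      refine Fin.cases ?_ (fun i => ?_) i
      · simpa using measurable_fst
      · simpa using! (measurable_pi_apply i).comp measurable_snd
    have hm : ∀ f : (Fin (n + 1) → ℝ) → ℝ≥0∞, Measurable f →
        Measurable fun a : ℝ => ∫⁻ y : Fin n → ℝ, f (Fin.cons a y) := fun f hf =>
      (hf.comp hcons).lintegral_prod_right'
    have hm1 : ∀ f : (Fin (n + 1) → ℝ) → ℝ≥0∞, Measurable f → ∀ a : ℝ,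
        Measurable fun y : Fin n → ℝ => f (Fin.cons a y) := fun f hf a =>
      (hf.comp hcons).comp measurable_prodMk_left
    rw [hF u hu, hF v hv, hF w hw]
    refine prekopa_leindler_real ht hs hts (hm u hu) (hm v hv) (hm w hw) fun a b => ?_
    refine ih (hm1 u hu a) (hm1 v hv b) (hm1 w hw _) fun x y => (h _ _).trans (le_of_eq ?_)
    congr 1
    ext i
    refine Fin.cases ?_ (fun i => ?_) i <;> simp

/-- Prékopa-Leindler inequality on Euclidean space. -/
theorem prekopa_leindler {t s : ℝ} (ht : 0 < t) (hs : 0 < s) (hts : t + s = 1) {n : ℕ}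
    {u v w : EuclideanSpace ℝ (Fin n) → ℝ≥0∞}
    (hu : Measurable u) (hv : Measurable v) (hw : Measurable w)
    (h : ∀ x y, u x ^ t * v y ^ s ≤ w (t • x + s • y)) :
    (∫⁻ x, u x) ^ t * (∫⁻ x, v x) ^ s ≤ ∫⁻ x, w x := by
  have hmp := PiLp.volume_preserving_toLp (Fin n)
  rw [← hmp.lintegral_comp hu, ← hmp.lintegral_comp hv, ← hmp.lintegral_comp hw]
  exact prekopa_leindler_pi ht hs hts n (hu.comp hmp.measurable) (hv.comp hmp.measurable)
    (hw.comp hmp.measurable) fun x y => h _ _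

end PrekopaLeindler

theorem sum_sum_hess_mul_mul (n : ℕ) (ψ : EuclideanSpace ℝ (Fin n) → ℝ)
    (x Y : EuclideanSpace ℝ (Fin n)) :
    ∑ i : Fin n, ∑ j : Fin n, hess n ψ x i j * Y i * Y j = fderiv ℝ (fderiv ℝ ψ) x Y Y := by
  have hY : Y = ∑ i, Y i • EuclideanSpace.single i (1 : ℝ) := by
    ext k
    simp [Finset.sum_apply, Pi.single_apply]
  conv_rhs => rw [hY]
  simp only [map_sum, map_smul, FunLike.coe_sum, FunLike.coe_smul, Finset.sum_apply,
    Pi.smul_apply, smul_eq_mul, hess, iteratedFDeriv_two_apply, Matrix.cons_val_zero,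
    Matrix.cons_val_one, Finset.mul_sum]
  rw [Finset.sum_comm]
  refine Finset.sum_congr rfl fun i _ => Finset.sum_congr rfl fun j _ => ?_
  ring

/-- A function whose Hessian is bounded below by `ρ` is `ρ`-strongly convex. -/
theorem strongConvex_of_hessian_ge {E : Type*} [NormedAddCommGroup E] [NormedSpace ℝ E]
    {ψ : E → ℝ} {ρ : ℝ} (hψ : ContDiff ℝ 2 ψ)
    (h : ∀ x Y : E, ρ * ‖Y‖ ^ 2 ≤ fderiv ℝ (fderiv ℝ ψ) x Y Y)
    {t s : ℝ} (ht : 0 ≤ t) (hs : 0 ≤ s) (hts : t + s = 1) (x y : E) :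
    ψ (t • x + s • y) + ρ / 2 * (t * s) * ‖x - y‖ ^ 2 ≤ t * ψ x + s * ψ y := by
  have hψ1 : Differentiable ℝ ψ := hψ.differentiable (by norm_num)
  have hψ2 : Differentiable ℝ (fderiv ℝ ψ) :=
    (hψ.fderiv_right (m := 1) (by norm_num)).differentiable (by norm_num)
  have hγ : ∀ r : ℝ, HasDerivAt (fun r : ℝ => y + r • (x - y)) (x - y) r := fun r => by
    simpa using ((hasDerivAt_id r).smul_const (x - y)).const_add y
  have hd1 : ∀ r : ℝ, HasDerivAt
      (fun r : ℝ => ψ (y + r • (x - y)) - ρ / 2 * ‖x - y‖ ^ 2 * r ^ 2)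
      (fderiv ℝ ψ (y + r • (x - y)) (x - y) - ρ * ‖x - y‖ ^ 2 * r) r := fun r => by
    have h1 := (hψ1 (y + r • (x - y))).hasFDerivAt.comp_hasDerivAt r (hγ r)
    have h2 := ((hasDerivAt_pow 2 r).const_mul (ρ / 2 * ‖x - y‖ ^ 2))
    exact (h1.sub h2).congr_deriv (by push_cast; ring)
  have hd2 : ∀ r : ℝ, HasDerivAt
      (fun r : ℝ => fderiv ℝ ψ (y + r • (x - y)) (x - y) - ρ * ‖x - y‖ ^ 2 * r)
      (fderiv ℝ (fderiv ℝ ψ) (y + r • (x - y)) (x - y) (x - y) - ρ * ‖x - y‖ ^ 2) r := fun r => by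
    have h1 : HasDerivAt (fun r : ℝ => fderiv ℝ ψ (y + r • (x - y)))
        (fderiv ℝ (fderiv ℝ ψ) (y + r • (x - y)) (x - y)) r :=
      (hψ2 (y + r • (x - y))).hasFDerivAt.comp_hasDerivAt r (hγ r)
    have h2 : HasDerivAt (fun r : ℝ => fderiv ℝ ψ (y + r • (x - y)) (x - y))
        (fderiv ℝ (fderiv ℝ ψ) (y + r • (x - y)) (x - y) (x - y)) r :=
      (h1.clm_apply (hasDerivAt_const r (x - y))).congr_deriv (by simp)
    have h3 := (hasDerivAt_id r).const_mul (ρ * ‖x - y‖ ^ 2)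
    exact (h2.sub h3).congr_deriv (by simp)
  have hderiv : deriv (fun r : ℝ => ψ (y + r • (x - y)) - ρ / 2 * ‖x - y‖ ^ 2 * r ^ 2) =
      fun r : ℝ => fderiv ℝ ψ (y + r • (x - y)) (x - y) - ρ * ‖x - y‖ ^ 2 * r :=
    funext fun r => (hd1 r).deriv
  have hconv := convexOn_univ_of_deriv2_nonneg (fun r => (hd1 r).differentiableAt)
    (by rw [hderiv]; exact fun r => (hd2 r).differentiableAt) (fun r => by
      rw [Function.iterate_succ_apply, Function.iterate_one, hderiv, (hd2 r).deriv, sub_nonneg]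
      exact h _ _)
  have key := hconv.2 (Set.mem_univ 1) (Set.mem_univ 0) ht hs hts
  have hpt : y + t • (x - y) = t • x + s • y := by
    rw [← eq_sub_iff_add_eq'] at hts
    rw [hts]
    module
  simp only [smul_eq_mul, mul_one, mul_zero, add_zero, one_smul, zero_smul, hpt,
    add_sub_cancel] at key
  obtain rfl : s = 1 - t := by linarith
  nlinarith [key]

/-- Prékopa-Leindler inequality relative to a probability measure with density `exp (-φ)`. -/
theorem rpow_integral_exp_le {n : ℕ} {φ g w : EuclideanSpace ℝ (Fin n) → ℝ}
    {μ : Measure (EuclideanSpace ℝ (Fin n))} [IsProbabilityMeasure μ]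
    (hφ : Measurable φ) (hg : Measurable g) (hw : Measurable w)
    (hμ : μ = volume.withDensity fun x => ENNReal.ofReal (exp (-φ x)))
    {t s : ℝ} (ht : 0 < t) (hs : 0 < s) (hts : t + s = 1)
    (hgi : Integrable (fun x => exp (g x / t)) μ) (hwi : Integrable (fun x => exp (w x)) μ)
    (h : ∀ x y, g x - t * φ x - s * φ y ≤ w (t • x + s • y) - φ (t • x + s • y)) :
    (∫ x, exp (g x / t) ∂μ) ^ t ≤ ∫ x, exp (w x) ∂μ := by
  have hconv : ∀ f : EuclideanSpace ℝ (Fin n) → ℝ, Measurable f →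
      ∫⁻ x, ENNReal.ofReal (exp (f x)) ∂μ = ∫⁻ x, ENNReal.ofReal (exp (f x - φ x)) := by
    intro f hf
    rw [hμ, lintegral_withDensity_eq_lintegral_mul _ (by fun_prop) (by fun_prop)]
    refine lintegral_congr fun x => ?_
    rw [Pi.mul_apply, ← ENNReal.ofReal_mul (exp_pos _).le, ← exp_add]
    ring_nf
  have hone : ∫⁻ x, ENNReal.ofReal (exp (0 - φ x)) = 1 := by
    rw [← hconv (fun _ => 0) measurable_const]
    simp
  have key := prekopa_leindler ht hs hts
    (u := fun x => ENNReal.ofReal (exp (g x / t - φ x)))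
    (v := fun x => ENNReal.ofReal (exp (0 - φ x)))
    (w := fun x => ENNReal.ofReal (exp (w x - φ x)))
    (by fun_prop) (by fun_prop) (by fun_prop) fun x y => by
      rw [ENNReal.ofReal_rpow_of_pos (exp_pos _), ENNReal.ofReal_rpow_of_pos (exp_pos _),
        ← exp_mul, ← exp_mul, ← ENNReal.ofReal_mul (exp_pos _).le, ← exp_add]
      refine ENNReal.ofReal_le_ofReal (exp_le_exp.2 (le_trans (le_of_eq ?_) (h x y)))
      field_simp
      ring
  rw [hone, ENNReal.one_rpow, mul_one, ← hconv w hw, ← hconv (fun x => g x / t) (by fun_prop),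
    ← ofReal_integral_eq_lintegral_ofReal hgi (Filter.Eventually.of_forall fun x => (exp_pos _).le),
    ← ofReal_integral_eq_lintegral_ofReal hwi (Filter.Eventually.of_forall fun x => (exp_pos _).le),
    ENNReal.ofReal_rpow_of_nonneg (integral_nonneg fun x => (exp_pos _).le) ht.le] at key
  exact (ENNReal.ofReal_le_ofReal_iff (integral_nonneg fun x => (exp_pos _).le)).1 key

/-- The `L^{1/t}` norm of `exp g` is bounded below by its first order expansion at `t = 1`, whose
slope is the entropy of `exp g`. -/
theorem integral_exp_add_mul_entropy_le {α : Type*} [MeasurableSpace α] {μ : Measure α}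
    [IsProbabilityMeasure μ] {g : α → ℝ} {t s : ℝ} (ht : 0 < t) (hs : 0 < s) (hts : t + s = 1)
    (hi : Integrable (fun x => exp (g x)) μ) (hi' : Integrable (fun x => exp (g x / t)) μ)
    (hgi : Integrable (fun x => exp (g x) * g x) μ) :
    (∫ x, exp (g x) ∂μ) + s * ((∫ x, exp (g x) * g x ∂μ) -
      (∫ x, exp (g x) ∂μ) * log (∫ x, exp (g x) ∂μ)) ≤ (∫ x, exp (g x / t) ∂μ) ^ t := by
  have hM := integral_exp_pos hi
  set M := ∫ x, exp (g x) ∂μ with hMdef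
  set A := ∫ x, exp (g x) * g x ∂μ with hA
  have hlow : exp (s / t * (A / M)) * M ≤ ∫ x, exp (g x / t) ∂μ := by
    calc exp (s / t * (A / M)) * M
        = ∫ x, exp (s / t * (A / M)) *
            ((1 - s / t * (A / M)) * exp (g x) + s / t * (exp (g x) * g x)) ∂μ := by
          rw [integral_const_mul, integral_add (hi.const_mul _) (hgi.const_mul _),
            integral_const_mul, integral_const_mul, ← hMdef, ← hA]
          field_simp
          ring
      _ ≤ _ := by
          refine integral_mono (((hi.const_mul _).add (hgi.const_mul _)).const_mul _) hi' fun x => ?_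
          have h1 := add_one_le_exp (s / t * g x - s / t * (A / M))
          have h2 : exp (g x / t) = exp (s / t * (A / M)) * (exp (g x) *
              exp (s / t * g x - s / t * (A / M))) := by
            rw [← exp_add, ← exp_add]
            congr 1
            obtain rfl : s = 1 - t := by linarith
            field_simp
            ring
          rw [h2]
          have h3 := mul_le_mul_of_nonneg_left h1 (exp_pos (g x)).le
          refine mul_le_mul_of_nonneg_left (le_trans (le_of_eq ?_) h3) (exp_pos _).le
          ring
  have hpow : (exp (s / t * (A / M)) * M) ^ t = M * exp (s * (A / M - log M)) := by
    rw [mul_rpow (exp_pos _).le hM.le, ← exp_mul, rpow_def_of_pos hM, ← exp_add]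
    nth_rw 3 [← exp_log hM]
    rw [← exp_add]
    congr 1
    obtain rfl : s = 1 - t := by linarith
    field_simp
    ring
  calc M + s * (A - M * log M) = M * (s * (A / M - log M) + 1) := by
        field_simp
        ring
    _ ≤ M * exp (s * (A / M - log M)) := by gcongr; exact add_one_le_exp _
    _ = (exp (s / t * (A / M)) * M) ^ t := hpow.symm
    _ ≤ _ := by gcongr

/-- A bounded continuous function is integrable for a finite measure. -/
theorem integrable_of_continuous_of_abs_le {E : Type*} [TopologicalSpace E] [MeasurableSpace E]
    [BorelSpace E] {μ : Measure E} [IsFiniteMeasure μ] {f : E → ℝ} (hf : Continuous f)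
    {C : ℝ} (hC : ∀ x, |f x| ≤ C) : Integrable f μ :=
  Integrable.of_bound hf.measurable.aestronglyMeasurable C (Filter.Eventually.of_forall hC)

/-- Logarithmic Sobolev inequality for `exp g`, with an error term, at time `s`. -/
theorem entropy_exp_le_add {n : ℕ} {φ g : EuclideanSpace ℝ (Fin n) → ℝ}
    {μ : Measure (EuclideanSpace ℝ (Fin n))} [IsProbabilityMeasure μ]
    (hφ : Continuous φ) (hμ : μ = volume.withDensity fun x => ENNReal.ofReal (exp (-φ x)))
    {ρ : ℝ} (hsc : ∀ t s : ℝ, 0 < t → 0 < s → t + s = 1 → ∀ x y,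
      φ (t • x + s • y) + ρ / 2 * (t * s) * ‖x - y‖ ^ 2 ≤ t * φ x + s * φ y)
    (hg : Continuous g) (hg' : Continuous (fderiv ℝ g)) {B L : ℝ} (hB : ∀ x, |g x| ≤ B)
    (hB' : ∀ x, ‖fderiv ℝ g x‖ ≤ B)
    (hq : ∀ z h, g (z + h) ≤ g z + fderiv ℝ g z h + L * ‖h‖ ^ 2)
    {s c : ℝ} (hs : 0 < s) (hs1 : s < 1) (hc : 0 < c) (hcs : c = ρ * (1 - s) - 2 * L * s)
    (hsB : s * (B ^ 2 / (2 * c)) ≤ 1) :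
    (∫ x, exp (g x) * g x ∂μ) - (∫ x, exp (g x) ∂μ) * log (∫ x, exp (g x) ∂μ) ≤
      1 / (2 * c) * (∫ x, exp (g x) * ‖fderiv ℝ g x‖ ^ 2 ∂μ) +
        s * (B ^ 2 / (2 * c)) ^ 2 * ∫ x, exp (g x) ∂μ := by
  have ht : 0 < 1 - s := by linarith
  set w : EuclideanSpace ℝ (Fin n) → ℝ := fun z => g z + s * (‖fderiv ℝ g z‖ ^ 2 / (2 * c)) with hw
  have hwc : Continuous w := by fun_prop
  have hexp : ∀ f : EuclideanSpace ℝ (Fin n) → ℝ, Continuous f → ∀ C, (∀ x, f x ≤ C) →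
      Integrable (fun x => exp (f x)) μ := fun f hf C hC =>
    integrable_of_continuous_of_abs_le (by fun_prop) (C := exp C) fun x => by
      rw [abs_of_pos (exp_pos _)]
      exact exp_le_exp.2 (hC x)
  have hgB : ∀ x, g x ≤ B := fun x => (le_abs_self _).trans (hB x)
  have hDB : ∀ x, ‖fderiv ℝ g x‖ ^ 2 ≤ B ^ 2 := fun x =>
    pow_le_pow_left₀ (norm_nonneg _) (hB' x) 2
  have hi1 := hexp g hg B hgB
  have hi2 := hexp (fun x => g x / (1 - s)) (by fun_prop) (B / (1 - s)) fun x => by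
    have := hgB x
    gcongr
  have hwle : ∀ x, s * (‖fderiv ℝ g x‖ ^ 2 / (2 * c)) ≤ s * (B ^ 2 / (2 * c)) := fun x => by
    have := hDB x
    gcongr
  have hi3 := hexp w hwc (B + 1) fun x => add_le_add (hgB x) ((hwle x).trans hsB)
  have hi4 : Integrable (fun x => exp (g x) * g x) μ :=
    integrable_of_continuous_of_abs_le (by fun_prop) (C := exp B * B) fun x => by
      rw [abs_mul, abs_of_pos (exp_pos _)]
      exact mul_le_mul (exp_le_exp.2 (hgB x)) (hB x) (abs_nonneg _) (exp_pos _).le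
  have hi5 : Integrable (fun x => exp (g x) * ‖fderiv ℝ g x‖ ^ 2) μ :=
    integrable_of_continuous_of_abs_le (by fun_prop) (C := exp B * B ^ 2) fun x => by
      rw [abs_mul, abs_of_pos (exp_pos _), abs_of_nonneg (by positivity)]
      exact mul_le_mul (exp_le_exp.2 (hgB x)) (hDB x) (by positivity) (exp_pos _).le
  have h1 := integral_exp_add_mul_entropy_le ht hs (by ring) hi1 hi2 hi4
  have h2 := rpow_integral_exp_le hφ.measurable hg.measurable hwc.measurable hμ ht hs (by ring)
    hi2 hi3 fun x y => by
      have e1 := hsc (1 - s) s ht hs (by ring) x y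
      set z := (1 - s) • x + s • y with hz
      have hx : x = z + s • (x - y) := by rw [hz]; module
      have e2 := hq z (s • (x - y))
      rw [← hx, norm_smul, norm_of_nonneg hs.le] at e2
      have e3 : fderiv ℝ g z (s • (x - y)) ≤ ‖fderiv ℝ g z‖ * (s * ‖x - y‖) := by
        refine (le_norm_self _).trans ((ContinuousLinearMap.le_opNorm _ _).trans_eq ?_)
        rw [norm_smul, norm_of_nonneg hs.le]
      have e4 : s * (‖fderiv ℝ g z‖ * ‖x - y‖ - c / 2 * ‖x - y‖ ^ 2) ≤
          s * (‖fderiv ℝ g z‖ ^ 2 / (2 * c)) := by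
        gcongr
        rw [le_div_iff₀ (by positivity)]
        nlinarith [sq_nonneg (‖fderiv ℝ g z‖ - c * ‖x - y‖)]
      have e5 : s * (c / 2 * ‖x - y‖ ^ 2) =
          ρ / 2 * ((1 - s) * s) * ‖x - y‖ ^ 2 - L * (s * ‖x - y‖) ^ 2 := by
        rw [hcs]
        ring
      simp only [hw]
      linarith
  have h3 : ∫ x, exp (w x) ∂μ ≤ (∫ x, exp (g x) ∂μ) +
      s / (2 * c) * (∫ x, exp (g x) * ‖fderiv ℝ g x‖ ^ 2 ∂μ) +
        (s * (B ^ 2 / (2 * c))) ^ 2 * ∫ x, exp (g x) ∂μ := by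
    have hi6 : Integrable
        (fun x => exp (g x) + s / (2 * c) * (exp (g x) * ‖fderiv ℝ g x‖ ^ 2)) μ :=
      hi1.add (hi5.const_mul _)
    rw [← integral_const_mul, ← integral_const_mul, ← integral_add hi1 (hi5.const_mul _),
      ← integral_add hi6 (hi1.const_mul _)]
    refine integral_mono hi3 (hi6.add (hi1.const_mul _)) fun x => ?_
    have hr0 : 0 ≤ s * (‖fderiv ℝ g x‖ ^ 2 / (2 * c)) := by positivity
    have hr := hwle x
    have e1 := (le_abs_self _).trans (abs_exp_sub_one_sub_id_le
      (x := s * (‖fderiv ℝ g x‖ ^ 2 / (2 * c))) (by rw [abs_of_nonneg hr0]; exact hr.trans hsB))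
    have e2 := pow_le_pow_left₀ hr0 hr 2
    have e3 := mul_le_mul_of_nonneg_left (sub_le_iff_le_add.1 (sub_le_iff_le_add.1 (e1.trans e2)))
      (exp_pos (g x)).le
    simp only [hw, exp_add]
    refine e3.trans (le_of_eq ?_)
    ring
  have h4 := h1.trans (h2.trans h3)
  refine le_of_mul_le_mul_left ?_ hs
  calc _ ≤ s / (2 * c) * (∫ x, exp (g x) * ‖fderiv ℝ g x‖ ^ 2 ∂μ) +
        (s * (B ^ 2 / (2 * c))) ^ 2 * ∫ x, exp (g x) ∂μ := by linarith
    _ = _ := by ring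

/-- Logarithmic Sobolev inequality for `exp g`, with `g` bounded with bounded derivatives. -/
theorem entropy_exp_le {n : ℕ} {φ g : EuclideanSpace ℝ (Fin n) → ℝ}
    {μ : Measure (EuclideanSpace ℝ (Fin n))} [IsProbabilityMeasure μ]
    (hφ : Continuous φ) (hμ : μ = volume.withDensity fun x => ENNReal.ofReal (exp (-φ x)))
    {ρ : ℝ} (hρ : 0 < ρ) (hsc : ∀ t s : ℝ, 0 < t → 0 < s → t + s = 1 → ∀ x y,
      φ (t • x + s • y) + ρ / 2 * (t * s) * ‖x - y‖ ^ 2 ≤ t * φ x + s * φ y)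
    (hg : Continuous g) (hg' : Continuous (fderiv ℝ g)) {B L : ℝ} (hB : ∀ x, |g x| ≤ B)
    (hB' : ∀ x, ‖fderiv ℝ g x‖ ≤ B)
    (hq : ∀ z h, g (z + h) ≤ g z + fderiv ℝ g z h + L * ‖h‖ ^ 2) :
    (∫ x, exp (g x) * g x ∂μ) - (∫ x, exp (g x) ∂μ) * log (∫ x, exp (g x) ∂μ) ≤
      1 / (2 * ρ) * (∫ x, exp (g x) * ‖fderiv ℝ g x‖ ^ 2 ∂μ) := by
  set M := ∫ x, exp (g x) ∂μ
  set I := ∫ x, exp (g x) * ‖fderiv ℝ g x‖ ^ 2 ∂μ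
  set c : ℝ → ℝ := fun s => ρ * (1 - s) - 2 * L * s with hc
  have hc0 : c 0 = ρ := by simp [hc]
  have hcc : ContinuousAt c 0 := by fun_prop
  have hne : (2 : ℝ) * c 0 ≠ 0 := by rw [hc0]; positivity
  have hcont : ContinuousAt (fun s => 1 / (2 * c s) * I + s * (B ^ 2 / (2 * c s)) ^ 2 * M) 0 := by
    fun_prop (disch := exact hne)
  have hcont' : ContinuousAt (fun s => s * (B ^ 2 / (2 * c s))) 0 := by
    fun_prop (disch := exact hne)
  have hlim : Filter.Tendsto (fun s => 1 / (2 * c s) * I + s * (B ^ 2 / (2 * c s)) ^ 2 * M)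
      (nhdsWithin 0 (Set.Ioi 0)) (nhds (1 / (2 * ρ) * I)) := by
    have := hcont.tendsto
    simp only [hc0, zero_mul, add_zero] at this
    exact this.mono_left nhdsWithin_le_nhds
  refine ge_of_tendsto hlim ?_
  have ev1 : ∀ᶠ s in nhds (0 : ℝ), 0 < c s := hcc.eventually (lt_mem_nhds (by rw [hc0]; exact hρ))
  have ev2 : ∀ᶠ s in nhds (0 : ℝ), s * (B ^ 2 / (2 * c s)) < 1 :=
    hcont'.eventually (gt_mem_nhds (by simp))
  filter_upwards [nhdsWithin_le_nhds ev1, nhdsWithin_le_nhds ev2,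
    nhdsWithin_le_nhds (gt_mem_nhds (zero_lt_one' ℝ)), self_mem_nhdsWithin] with s h1 h2 h3 h4
  exact entropy_exp_le_add hφ hμ hsc hg hg' hB hB' hq h4 h3 h1 rfl h2.le

/-- A function whose derivative is `L`-Lipschitz has a quadratic upper bound. -/
theorem le_add_fderiv_add_sq {E : Type*} [NormedAddCommGroup E] [NormedSpace ℝ E] {g : E → ℝ}
    (hg : Differentiable ℝ g) {L : NNReal} (hL : LipschitzWith L (fderiv ℝ g)) (z h : E) :
    g (z + h) ≤ g z + fderiv ℝ g z h + L * ‖h‖ ^ 2 := by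
  have key := (convex_closedBall z ‖h‖).norm_image_sub_le_of_norm_fderiv_le'
    (f := g) (φ := fderiv ℝ g z) (C := L * ‖h‖) (fun x _ => hg x) (fun x hx => by
      refine (hL.norm_sub_le x z).trans ?_
      gcongr
      simpa [dist_eq_norm] using hx)
    (Metric.mem_closedBall_self (norm_nonneg h)) (y := z + h) (by simp)
  rw [add_sub_cancel_left] at key
  have := (le_abs_self _).trans key
  linarith

/-- Logarithmic Sobolev inequality for positive smooth functions that are constant outside a
compact set. -/
theorem entropy_le_of_hasCompactSupport_sub {n : ℕ} {φ F : EuclideanSpace ℝ (Fin n) → ℝ}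
    {μ : Measure (EuclideanSpace ℝ (Fin n))} [IsProbabilityMeasure μ]
    (hφ : Continuous φ) (hμ : μ = volume.withDensity fun x => ENNReal.ofReal (exp (-φ x)))
    {ρ : ℝ} (hρ : 0 < ρ) (hsc : ∀ t s : ℝ, 0 < t → 0 < s → t + s = 1 → ∀ x y,
      φ (t • x + s • y) + ρ / 2 * (t * s) * ‖x - y‖ ^ 2 ≤ t * φ x + s * φ y)
    (hF : ContDiff ℝ 2 F) (hpos : ∀ x, 0 < F x) {ε : ℝ}
    (hsupp : HasCompactSupport fun x => F x - ε) :
    (∫ x, F x * log (F x) ∂μ) - (∫ x, F x ∂μ) * log (∫ x, F x ∂μ) ≤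
      1 / (2 * ρ) * ∫ x, ‖fderiv ℝ F x‖ ^ 2 / F x ∂μ := by
  set g : EuclideanSpace ℝ (Fin n) → ℝ := fun x => log (F x) with hg
  have hgC : ContDiff ℝ 2 g := hF.log fun x => (hpos x).ne'
  have hgs : HasCompactSupport fun x => g x - log ε := by
    have := hsupp.comp_left (g := fun r => log (r + ε) - log ε) (by simp)
    simpa [Function.comp_def] using! this
  have hgd : fderiv ℝ g = fderiv ℝ fun x => g x - log ε := by
    ext1 x
    rw [fderiv_sub_const]
  have hgds : HasCompactSupport (fderiv ℝ g) := hgd ▸ hgs.fderiv ℝ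
  have hgd1 : ContDiff ℝ 1 (fderiv ℝ g) := hgC.fderiv_right (by norm_num)
  obtain ⟨C₁, hC₁⟩ := hgs.exists_bound_of_continuous (hgC.continuous.sub continuous_const)
  obtain ⟨C₂, hC₂⟩ := hgds.exists_bound_of_continuous hgd1.continuous
  obtain ⟨L, hL⟩ := hgd1.lipschitzWith_of_hasCompactSupport hgds (by norm_num)
  have key := entropy_exp_le hφ hμ hρ hsc hgC.continuous hgd1.continuous
    (B := max (C₁ + |log ε|) C₂) (L := L)
    (fun x => by
      refine le_trans ?_ (le_max_left _ _)
      have h1 := hC₁ x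
      have h2 := abs_add_le (g x - log ε) (log ε)
      rw [sub_add_cancel] at h2
      rw [norm_eq_abs] at h1
      linarith)
    (fun x => (hC₂ x).trans (le_max_right _ _))
    (le_add_fderiv_add_sq (hgC.differentiable (by norm_num)) hL)
  have hexp : ∀ x, exp (g x) = F x := fun x => exp_log (hpos x)
  have hD : ∀ x, F x * ‖fderiv ℝ g x‖ ^ 2 = ‖fderiv ℝ F x‖ ^ 2 / F x := fun x => by
    have h1 : fderiv ℝ g x = (F x)⁻¹ • fderiv ℝ F x :=
      fderiv.log (hF.differentiable (by norm_num) x) (hpos x).ne'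
    have := (hpos x).ne'
    rw [h1, norm_smul, norm_inv, norm_of_nonneg (hpos x).le]
    field_simp
  simpa only [hexp, hD] using key

/-- Smooth compactly supported cutoffs converging to `1` with uniformly decaying derivatives. -/
theorem exists_seq_contDiff_cutoff (E : Type*) [NormedAddCommGroup E] [InnerProductSpace ℝ E]
    [FiniteDimensional ℝ E] :
    ∃ (C : ℝ) (χ : ℕ → E → ℝ), 0 ≤ C ∧ (∀ k, ContDiff ℝ 2 (χ k)) ∧
      (∀ k, HasCompactSupport (χ k)) ∧ (∀ k x, 0 ≤ χ k x) ∧ (∀ k x, χ k x ≤ 1) ∧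
      (∀ x, Filter.Tendsto (fun k => χ k x) Filter.atTop (nhds 1)) ∧
      ∀ k x, ‖fderiv ℝ (χ k) x‖ ≤ C / (k + 1) := by
  let b : ContDiffBump (0 : E) := ⟨1, 2, one_pos, one_lt_two⟩
  have hb : ContDiff ℝ 2 b := b.contDiff
  obtain ⟨C, hC⟩ := hb.lipschitzWith_of_hasCompactSupport b.hasCompactSupport (by norm_num)
  refine ⟨C, fun k x => b ((k + 1 : ℝ)⁻¹ • x), C.2, fun k => hb.comp (contDiff_const_smul _),
    fun k => b.hasCompactSupport.comp_smul (inv_ne_zero (by positivity)),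
    fun k x => b.nonneg, fun k x => b.le_one, fun x => ?_, fun k x => ?_⟩
  · refine tendsto_const_nhds.congr' ?_
    obtain ⟨N, hN⟩ := exists_nat_ge ‖x‖
    filter_upwards [Filter.eventually_ge_atTop N] with k hk
    refine (b.one_of_mem_closedBall ?_).symm
    have : (N : ℝ) ≤ k := by exact_mod_cast hk
    rw [mem_closedBall_zero_iff, norm_smul, norm_inv, norm_of_nonneg (by positivity),
      inv_mul_le_iff₀ (by positivity)]
    change ‖x‖ ≤ (k + 1) * 1
    linarith
  · have hlip : LipschitzWith (C * ‖(k + 1 : ℝ)⁻¹‖₊) fun x => b ((k + 1 : ℝ)⁻¹ • x) :=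
      hC.comp (lipschitzWith_smul _)
    have := norm_fderiv_le_of_lipschitz ℝ hlip (x₀ := x)
    rwa [NNReal.coe_mul, coe_nnnorm, norm_inv, norm_of_nonneg (by positivity),
      ← div_eq_mul_inv] at this

theorem abs_mul_log_le {u a : ℝ} (hu : 0 < u) (ha : 0 < a) (hua : u ≤ a + 1) :
    |u * log u| ≤ 3 + 2 * a + 2 * |a * log a| := by
  have h0 := abs_nonneg (a * log a)
  rcases le_total u 1 with h1 | h1
  · have := abs_log_mul_self_lt u hu h1
    rw [mul_comm] at this
    linarith
  · rw [abs_of_nonneg (mul_nonneg hu.le (log_nonneg h1))]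
    have h2 : u * log u ≤ (a + 1) * log (a + 1) := by
      have := log_nonneg h1
      gcongr
    refine h2.trans ?_
    rcases le_total a 1 with h3 | h3
    · have h4 := log_le_sub_one_of_pos (show 0 < a + 1 by linarith)
      nlinarith
    · have h4 : log (a + 1) ≤ log 2 + log a := by
        rw [← log_mul two_ne_zero ha.ne']
        exact log_le_log (by linarith) (by linarith)
      have h5 := log_le_sub_one_of_pos (zero_lt_two' ℝ)
      have h6 := log_nonneg h3
      have h7 := le_abs_self (a * log a)
      have h8 : (a + 1) * log (a + 1) ≤ (2 * a) * (1 + log a) :=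
        mul_le_mul (by linarith) (by linarith) (log_nonneg (by linarith)) (by linarith)
      nlinarith

/-- The Fisher information density of a truncation is controlled by that of the function. -/
theorem norm_fderiv_sq_div_truncation_le {E : Type*} [NormedAddCommGroup E] [NormedSpace ℝ E]
    {f χ : E → ℝ} {x : E} {ε a : ℝ} (hf : DifferentiableAt ℝ f x) (hχ : DifferentiableAt ℝ χ x)
    (hpos : 0 < f x) (hε : 0 < ε) (hχ0 : 0 ≤ χ x) (hχ1 : χ x ≤ 1) (ha : ‖fderiv ℝ χ x‖ ≤ a) :
    ‖fderiv ℝ (fun y => χ y ^ 2 * f y + ε) x‖ ^ 2 / (χ x ^ 2 * f x + ε) ≤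
      (1 + 2 * a) * (‖fderiv ℝ f x‖ ^ 2 / f x) + (2 * a + 4 * a ^ 2) * f x := by
  have ha0 : 0 ≤ a := (norm_nonneg _).trans ha
  have hd : fderiv ℝ (fun y => χ y ^ 2 * f y + ε) x =
      χ x ^ 2 • fderiv ℝ f x + (2 * χ x * f x) • fderiv ℝ χ x := by
    have h1 := (((hχ.hasFDerivAt.pow 2).mul hf.hasFDerivAt).add_const ε).fderiv
    refine Eq.trans h1 ?_
    ext v
    simp
    ring
  set D := ‖fderiv ℝ f x‖
  have hD : 0 ≤ D := norm_nonneg _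
  have hn : ‖fderiv ℝ (fun y => χ y ^ 2 * f y + ε) x‖ ≤ χ x * (D + 2 * f x * a) := by
    rw [hd]
    refine (norm_add_le _ _).trans ?_
    rw [norm_smul, norm_smul, norm_of_nonneg (by positivity), norm_of_nonneg (by positivity)]
    calc χ x ^ 2 * D + 2 * χ x * f x * ‖fderiv ℝ χ x‖ ≤ χ x * D + 2 * χ x * f x * a := by
          gcongr
          nlinarith
      _ = _ := by ring
  have hF : 0 < χ x ^ 2 * f x + ε := by positivity
  calc _ ≤ (χ x * (D + 2 * f x * a)) ^ 2 / (χ x ^ 2 * f x + ε) := by gcongr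
    _ ≤ (D + 2 * f x * a) ^ 2 / f x := by
        rw [div_le_div_iff₀ hF hpos]
        nlinarith [mul_nonneg (sq_nonneg (D + 2 * f x * a)) hε.le]
    _ = D ^ 2 / f x + 2 * a * (2 * D) + 4 * a ^ 2 * f x := by
        field_simp
        ring
    _ ≤ D ^ 2 / f x + 2 * a * (D ^ 2 / f x + f x) + 4 * a ^ 2 * f x := by
        gcongr
        rw [div_add' _ _ _ hpos.ne', le_div_iff₀ hpos]
        nlinarith [sq_nonneg (D - f x)]
    _ = _ := by ring

/-- Logarithmic Sobolev inequality for the probability measure with strongly log-concave density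
`exp (-φ)`. -/
theorem entropy_le_of_strongConvex {n : ℕ} {φ f : EuclideanSpace ℝ (Fin n) → ℝ}
    {μ : Measure (EuclideanSpace ℝ (Fin n))} [IsProbabilityMeasure μ]
    (hφ : Continuous φ) (hμ : μ = volume.withDensity fun x => ENNReal.ofReal (exp (-φ x)))
    {ρ : ℝ} (hρ : 0 < ρ) (hsc : ∀ t s : ℝ, 0 < t → 0 < s → t + s = 1 → ∀ x y,
      φ (t • x + s • y) + ρ / 2 * (t * s) * ‖x - y‖ ^ 2 ≤ t * φ x + s * φ y)
    (hf : ContDiff ℝ 2 f) (hpos : ∀ x, 0 < f x) (hi1 : Integrable f μ)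
    (hi2 : Integrable (fun x => f x * log (f x)) μ)
    (hi3 : Integrable (fun x => ‖fderiv ℝ f x‖ ^ 2 / f x) μ) :
    (∫ x, f x * log (f x) ∂μ) - (∫ x, f x ∂μ) * log (∫ x, f x ∂μ) ≤
      1 / (2 * ρ) * ∫ x, ‖fderiv ℝ f x‖ ^ 2 / f x ∂μ := by
  obtain ⟨C, χ, hC, hχc, hχs, hχ0, hχ1, hχlim, hχd⟩ :=
    exists_seq_contDiff_cutoff (EuclideanSpace ℝ (Fin n))
  set ε : ℕ → ℝ := fun k => 1 / (k + 1) with hε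
  have hε0 : ∀ k, 0 < ε k := fun k => Nat.one_div_pos_of_nat
  have hε1 : ∀ k, ε k ≤ 1 := fun k => by
    rw [hε]
    exact (div_le_one (by positivity)).2 (by linarith [Nat.cast_nonneg (α := ℝ) k])
  have hεlim : Filter.Tendsto ε Filter.atTop (nhds 0) := tendsto_one_div_add_atTop_nhds_zero_nat
  set a : ℕ → ℝ := fun k => C / (k + 1) with ha
  have halim : Filter.Tendsto a Filter.atTop (nhds 0) := by
    simpa [ha, hε, div_eq_mul_inv] using hεlim.const_mul C
  set F : ℕ → EuclideanSpace ℝ (Fin n) → ℝ := fun k x => χ k x ^ 2 * f x + ε k with hF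
  have hFc : ∀ k, ContDiff ℝ 2 (F k) := fun k =>
    (((hχc k).pow 2).mul hf).add contDiff_const
  have hFpos : ∀ k x, 0 < F k x := fun k x =>
    add_pos_of_nonneg_of_pos (mul_nonneg (sq_nonneg _) (hpos x).le) (hε0 k)
  have hFle : ∀ k x, F k x ≤ f x + 1 := fun k x => by
    have h1 : χ k x ^ 2 ≤ 1 := pow_le_one₀ (hχ0 k x) (hχ1 k x)
    have h2 := mul_le_mul_of_nonneg_right h1 (hpos x).le
    have h3 := hε1 k
    simp only [hF]
    linarith
  have hFlim : ∀ x, Filter.Tendsto (fun k => F k x) Filter.atTop (nhds (f x)) := fun x => by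
    simpa using (((hχlim x).pow 2).mul_const (f x)).add hεlim
  have hFs : ∀ k, HasCompactSupport fun x => F k x - ε k := fun k => by
    have : (fun x => F k x - ε k) = χ k * fun x => χ k x * f x := by
      ext x
      simp only [hF, Pi.mul_apply]
      ring
    rw [this]
    exact (hχs k).mul_right
  have hlim1 : Filter.Tendsto (fun k => ∫ x, F k x ∂μ) Filter.atTop (nhds (∫ x, f x ∂μ)) :=
    tendsto_integral_of_dominated_convergence (fun x => f x + 1)
      (fun k => (hFc k).continuous.measurable.aestronglyMeasurable)
      (hi1.add (integrable_const 1))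
      (fun k => Filter.Eventually.of_forall fun x => by
        rw [norm_of_nonneg (hFpos k x).le]
        exact hFle k x)
      (Filter.Eventually.of_forall hFlim)
  have hlim2 : Filter.Tendsto (fun k => ∫ x, F k x * log (F k x) ∂μ) Filter.atTop
      (nhds (∫ x, f x * log (f x) ∂μ)) :=
    tendsto_integral_of_dominated_convergence (fun x => 3 + 2 * f x + 2 * |f x * log (f x)|)
      (fun k => (continuous_mul_log.comp (hFc k).continuous).measurable.aestronglyMeasurable)
      (((integrable_const 3).add (hi1.const_mul 2)).add (hi2.abs.const_mul 2))
      (fun k => Filter.Eventually.of_forall fun x =>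
        abs_mul_log_le (hFpos k x) (hpos x) (hFle k x))
      (Filter.Eventually.of_forall fun x => (continuous_mul_log.tendsto _).comp (hFlim x))
  have hlim3 : Filter.Tendsto (fun k => (∫ x, F k x ∂μ) * log (∫ x, F k x ∂μ)) Filter.atTop
      (nhds ((∫ x, f x ∂μ) * log (∫ x, f x ∂μ))) :=
    (continuous_mul_log.tendsto _).comp hlim1
  have hlim4 : Filter.Tendsto (fun k => 1 / (2 * ρ) *
      ((1 + 2 * a k) * (∫ x, ‖fderiv ℝ f x‖ ^ 2 / f x ∂μ) +
        (2 * a k + 4 * a k ^ 2) * ∫ x, f x ∂μ)) Filter.atTop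
      (nhds (1 / (2 * ρ) * ∫ x, ‖fderiv ℝ f x‖ ^ 2 / f x ∂μ)) := by
    have h1 := (halim.const_mul 2).const_add 1
    have h2 := (halim.const_mul 2).add ((halim.pow 2).const_mul 4)
    have h3 := ((h1.mul_const (∫ x, ‖fderiv ℝ f x‖ ^ 2 / f x ∂μ)).add
      (h2.mul_const (∫ x, f x ∂μ))).const_mul (1 / (2 * ρ))
    simpa using h3
  refine le_of_tendsto_of_tendsto' (hlim2.sub hlim3) hlim4 fun k => ?_
  refine (entropy_le_of_hasCompactSupport_sub hφ hμ hρ hsc (hFc k) (hFpos k) (hFs k)).trans ?_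
  gcongr
  rw [← integral_const_mul, ← integral_const_mul,
    ← integral_add (hi3.const_mul _) (hi1.const_mul _)]
  refine integral_mono_of_nonneg
    (Filter.Eventually.of_forall fun x => div_nonneg (sq_nonneg _) (hFpos k x).le)
    ((hi3.const_mul _).add (hi1.const_mul _)) (Filter.Eventually.of_forall fun x => ?_)
  exact norm_fderiv_sq_div_truncation_le (hf.differentiable (by norm_num) x)
    ((hχc k).differentiable (by norm_num) x) (hpos x) (hε0 k) (hχ0 k x) (hχ1 k x) (hχd k x)

theorem bakry_emery_logSobolev (n : ℕ) (ψ : EuclideanSpace ℝ (Fin n) → ℝ) (ρ : ℝ)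
    (hρ : 0 < ρ) (hψ : ContDiff ℝ 2 ψ)
    (hint : Integrable (fun x => Real.exp (-ψ x))
      (volume : Measure (EuclideanSpace ℝ (Fin n))))
    (hconv : ∀ x Y : EuclideanSpace ℝ (Fin n),
      ρ * ‖Y‖ ^ 2 ≤ ∑ i : Fin n, ∑ j : Fin n, hess n ψ x i j * Y i * Y j)
    (μ : Measure (EuclideanSpace ℝ (Fin n)))
    (hμ : μ = (volume : Measure (EuclideanSpace ℝ (Fin n))).withDensity
      (fun x => ENNReal.ofReal
        (Real.exp (-ψ x) / ∫ y, Real.exp (-ψ y)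
          ∂(volume : Measure (EuclideanSpace ℝ (Fin n))))))
    (f : EuclideanSpace ℝ (Fin n) → ℝ) (hf : ContDiff ℝ (⊤ : ℕ∞) f) (hpos : ∀ x, 0 < f x)
    (hi1 : Integrable f μ)
    (hi2 : Integrable (fun x => f x * Real.log (f x)) μ)
    (hi3 : Integrable (fun x => ‖gradient f x‖ ^ 2 / f x) μ) :
    ∫ x, f x * Real.log (f x / ∫ y, f y ∂μ) ∂μ
      ≤ (1 / (2 * ρ)) * ∫ x, ‖gradient f x‖ ^ 2 / f x ∂μ := by
  have hZ : 0 < ∫ y, Real.exp (-ψ y) := integral_exp_pos hint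
  set Z := ∫ y, Real.exp (-ψ y) with hZdef
  have hdens : ∀ x, exp (-ψ x) / Z = exp (-(ψ x + log Z)) := fun x => by
    rw [neg_add, exp_add, exp_neg (log Z), exp_log hZ, div_eq_mul_inv]
  have hprob : IsProbabilityMeasure μ := ⟨by
    rw [hμ, withDensity_apply _ MeasurableSet.univ, Measure.restrict_univ,
      ← ofReal_integral_eq_lintegral_ofReal (hint.div_const Z)
        (Filter.Eventually.of_forall fun x => by positivity),
      integral_div, ← hZdef, div_self hZ.ne', ENNReal.ofReal_one]⟩
  simp only [hdens] at hμ
  have hgrad : ∀ x, ‖gradient f x‖ = ‖fderiv ℝ f x‖ := fun x => LinearIsometryEquiv.norm_map _ _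
  simp only [hgrad] at hi3 ⊢
  have key := entropy_le_of_strongConvex (φ := fun x => ψ x + log Z)
    (hψ.continuous.add continuous_const) hμ hρ
    (fun t s ht hs hts x y => by
      have h1 := strongConvex_of_hessian_ge hψ
        (fun x Y => (hconv x Y).trans_eq (sum_sum_hess_mul_mul n ψ x Y)) ht.le hs.le hts x y
      have h2 : t * log Z + s * log Z = log Z := by rw [← add_mul, hts, one_mul]
      linarith)
    (hf.of_le (WithTop.coe_le_coe.2 (le_top (a := (2 : ℕ∞))))) hpos hi1 hi2 hi3
  have hM : 0 < ∫ y, f y ∂μ := by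
    simpa only [exp_log (hpos _)] using integral_exp_pos (μ := μ) (f := fun x => log (f x))
      (by simpa only [exp_log (hpos _)] using hi1)
  refine le_trans (le_of_eq ?_) key
  rw [← integral_mul_const, ← integral_sub hi2 (hi1.mul_const _)]
  refine integral_congr_ae (Filter.Eventually.of_forall fun x => ?_)
  simp only [log_div (hpos x).ne' hM.ne', mul_sub]
end
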